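/- arXiv:1212.6073 — 8 statements merged into one kernel-verified Lean document; each statement's English description precedes it below -/
import Mathlib

section
/- Let k ≥ 1 and let r_1, …, r_k be complex numbers. Then there exist an open neighborhood U of 0 in ℂ^k and a holomorphic function v : U → ℂ with v(0) = 0 such that 1 − e^{v(s)} + Σ_{a=1}^k s_a · e^{r_a · v(s)} = 0 for all s = (s_1, …, s_k) ∈ U. Moreover, v is analytic at 0 and, for every nonzero multi-index (n_1, …, n_k) ∈ ℤ_{≥0}^k, the coefficient of s_1^{n_1} ⋯ s_k^{n_k} in the Taylor expansion of v at 0 equals (r_1 n_1 + ⋯ + r_k n_k − 1)_{(n_1 + ⋯ + n_k − 1)} / (n_1! ⋯ n_k!). -/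
open scoped BigOperators

/-- existence of the implicit function -/
lemma exists_implicit (k : ℕ) (r : Fin k → ℂ) :
    ∃ v : (Fin k → ℂ) → ℂ, AnalyticAt ℂ v 0 ∧ v 0 = 0 ∧
      ∀ᶠ s in nhds (0 : Fin k → ℂ),
        1 - Complex.exp (v s) + ∑ a : Fin k, s a * Complex.exp (r a * v s) = 0 := by
  let f : (Fin k → ℂ) × ℂ → ℂ := fun p =>
    1 - Complex.exp p.2 + ∑ a : Fin k, p.1 a * Complex.exp (r a * p.2)
  have hf : ContDiff ℂ ⊤ f := by
    have : ∀ a : Fin k, ContDiff ℂ ⊤ (fun p : (Fin k → ℂ) × ℂ => p.1 a) := fun a =>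
      (contDiff_apply ℂ ℂ a).comp contDiff_fst
    fun_prop
  have hfa : ContDiffAt ℂ ⊤ f (0, 0) := hf.contDiffAt
  have hd : HasDerivAt (fun z : ℂ => f (0, z)) (-1) 0 := by
    have h := (Complex.hasDerivAt_exp 0).const_sub 1
    simpa [f] using h
  have hinv : (fderiv ℂ f (0, 0) ∘L .inr ℂ (Fin k → ℂ) ℂ).IsInvertible := by
    have h1 : HasFDerivAt f (fderiv ℂ f (0, 0)) (0, 0) :=
      (hfa.differentiableAt (by simp)).hasFDerivAt
    have h2 : HasFDerivAt (fun z : ℂ => ((0 : Fin k → ℂ), z)) (.inr ℂ (Fin k → ℂ) ℂ) 0 :=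
      hasFDerivAt_prodMk_right 0 0
    have h3 := (HasFDerivAt.comp (0 : ℂ) h1 h2)
    have h4 := h3.unique hd.hasFDerivAt
    rw [h4]
    refine ⟨ContinuousLinearEquiv.neg ℂ, ?_⟩
    ext
    simp
  refine ⟨hfa.implicitFunction (by simp) hinv,
    (hfa.contDiffAt_implicitFunction (by simp) hinv).analyticAt,
    hfa.implicitFunction_apply_self (by simp) hinv, ?_⟩
  have h := hfa.eventually_apply_implicitFunction (by simp) hinv
  simpa [f] using h

lemma summable_prod_half (k : ℕ) :
    Summable (fun n : Fin k → ℕ => ∏ a, ((1 : ℝ) / 2) ^ n a) := by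
  induction k with
  | zero => exact Summable.of_finite
  | succ k ih =>
    rw [← (Fin.consEquiv (fun _ : Fin (k+1) => ℕ)).summable_iff]
    have := Summable.mul_of_nonneg (summable_geometric_two) ih (fun _ => by positivity)
      (fun _ => by
        simp only [Pi.zero_apply]
        positivity)
    refine this.congr fun p => ?_
    simp [Fin.consEquiv, Fin.prod_univ_succ, mul_comm]

lemma desc_bound (M : ℕ) (z : ℂ) : ‖(descPochhammer ℂ M).eval z‖ ≤ (‖z‖ + M) ^ M := by
  rw [descPochhammer_eval_eq_prod_range, norm_prod]
  calc _ ≤ ∏ j ∈ Finset.range M, (‖z‖ + M) := by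
        refine Finset.prod_le_prod (fun _ _ => norm_nonneg _) fun j hj => ?_
        refine (norm_sub_le _ _).trans ?_
        have : (j : ℝ) ≤ M := by exact_mod_cast (Finset.mem_range.1 hj).le
        simpa using this
    _ = _ := by simp

/-- the coefficient -/
noncomputable def cf {k : ℕ} (r : Fin k → ℂ) (n : Fin k →₀ ℕ) : ℂ :=
  if n = 0 then (0 : ℂ)
            else (descPochhammer ℂ ((∑ a : Fin k, n a) - 1)).eval
                  ((∑ a : Fin k, r a * (n a : ℂ)) - 1) / ∏ a : Fin k, ((n a).factorial : ℂ)

lemma cf_bound {k : ℕ} (r : Fin k → ℂ) : ∃ K : ℝ, 0 < K ∧ ∀ n : Fin k →₀ ℕ,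
    ‖cf r n‖ ≤ ∏ a, K ^ n a := by
  set R : ℝ := ∑ a, ‖r a‖
  have hR : 0 ≤ R := by positivity
  refine ⟨(R + 1) * Real.exp k, by positivity, fun n => ?_⟩
  unfold cf
  split_ifs with hn
  · simp; positivity
  set N := ∑ a, n a with hN
  have hN1 : 1 ≤ N := by
    by_contra h
    apply hn
    have : N = 0 := by omega
    rw [hN, Finset.sum_eq_zero_iff] at this
    ext a
    simpa using this a (Finset.mem_univ a)
  have hz : ‖(∑ a : Fin k, r a * (n a : ℂ)) - 1‖ ≤ R * N + 1 := by
    refine (norm_sub_le _ _).trans ?_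
    simp only [norm_one]
    gcongr
    refine (norm_sum_le _ _).trans ?_
    rw [Finset.sum_mul]
    refine Finset.sum_le_sum fun a _ => ?_
    rw [norm_mul]
    gcongr
    simp only [Complex.norm_natCast, Nat.cast_le]
    exact Finset.single_le_sum (f := fun a => n a) (fun _ _ => Nat.zero_le _) (Finset.mem_univ a)
  have h1 := desc_bound (N - 1) ((∑ a : Fin k, r a * (n a : ℂ)) - 1)
  have h2 : (‖(∑ a : Fin k, r a * (n a : ℂ)) - 1‖ + ((N - 1 : ℕ) : ℝ)) ≤ (R + 1) * N := by
    push_cast [hN1]; linarith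
  have hN1' : (1 : ℝ) ≤ N := by exact_mod_cast hN1
  have h3 : ‖(descPochhammer ℂ (N - 1)).eval ((∑ a : Fin k, r a * (n a : ℂ)) - 1)‖
      ≤ ((R + 1) * N) ^ N := by
    refine h1.trans ((pow_le_pow_left₀ (by positivity) h2 _).trans ?_)
    exact pow_le_pow_right₀ (by nlinarith) (by omega)
  rw [norm_div, norm_prod]
  simp only [Complex.norm_natCast]
  calc _ ≤ ((R + 1) * N) ^ N / ∏ a, ((n a).factorial : ℝ) := by gcongr
    _ = (R + 1) ^ N * ∏ a, ((N : ℝ) ^ n a / (n a).factorial) := by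
        rw [mul_pow, Finset.prod_div_distrib, Finset.prod_pow_eq_pow_sum]
        ring
    _ ≤ (R + 1) ^ N * ∏ a : Fin k, Real.exp N := by
        gcongr with a
        exact Real.pow_div_factorial_le_exp _ (by positivity) _
    _ = _ := by
        rw [Finset.prod_pow_eq_pow_sum, mul_pow, ← hN]
        simp only [Finset.prod_const, Finset.card_univ, Fintype.card_fin, ← Real.exp_nat_mul]
        rw [mul_comm (k : ℝ)]

lemma summable_cf {k : ℕ} (r : Fin k → ℂ) : ∀ᶠ s in nhds (0 : Fin k → ℂ),
    Summable (fun n : Fin k →₀ ℕ => cf r n * ∏ a, s a ^ n a) := by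
  obtain ⟨K, hK, h⟩ := cf_bound r
  filter_upwards [Metric.ball_mem_nhds (0 : Fin k → ℂ) (show 0 < 1 / (2 * K) by positivity)]
    with s hs
  have hs' : ∀ a, K * ‖s a‖ ≤ 1 / 2 := fun a => by
    have h1 : ‖s a‖ ≤ 1 / (2 * K) := (norm_le_pi_norm s a).trans (by simpa using (mem_ball_zero_iff.1 hs).le)
    calc K * ‖s a‖ ≤ K * (1 / (2 * K)) := by gcongr
      _ = 1 / 2 := by field_simp
  have hsum : Summable (fun n : Fin k →₀ ℕ => ∏ a, ((1 : ℝ) / 2) ^ n a) :=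
    (Finsupp.equivFunOnFinite.summable_iff (f := fun n : Fin k → ℕ => ∏ a, ((1 : ℝ) / 2) ^ n a)).2
      (summable_prod_half k)
  refine Summable.of_norm_bounded hsum fun n => ?_
  rw [norm_mul, norm_prod]
  calc _ ≤ (∏ a, K ^ n a) * ∏ a, ‖s a ^ n a‖ := by gcongr; exact h n
    _ = ∏ a, (K * ‖s a‖) ^ n a := by simp [← Finset.prod_mul_distrib, mul_pow]
    _ ≤ _ := by
      gcongr with a
      exact hs' a
open Polynomial

noncomputable def Gp (y : ℂ) : ℕ → ℂ[X]
  | 0 => 1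
  | (M+1) => X * (descPochhammer ℂ M).comp (X + C (y - 1))

lemma Gp_step {k : ℕ} (r : Fin k → ℂ) (n : Fin k → ℕ) (M : ℕ) (hn : ∑ a, n a = M + 1) (x y : ℂ)
    (hy : y = ∑ a, r a * (n a : ℂ)) :
    (Gp y (M+1)).eval (x+1) - (Gp y (M+1)).eval x
      = ∑ a, (n a : ℂ) * (Gp (y - r a) M).eval (x + r a) := by
  have hn' : ∑ a, (n a : ℂ) = M + 1 := by exact_mod_cast hn
  cases M with
  | zero => simp [Gp, hn']
  | succ M =>
    have e : ∀ a, x + r a + (y - r a - 1) = x + y - 1 := fun a => by ring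
    have e1 : x + 1 + (y - 1) = x + y := by ring
    have e2 : x + (y - 1) = x + y - 1 := by ring
    simp only [Gp, eval_mul, eval_X, eval_comp, eval_add, eval_C, e, e1, e2]
    have h1 : (descPochhammer ℂ (M+1)).eval (x + y) = (x+y) * (descPochhammer ℂ M).eval (x+y-1) := by
      simp [descPochhammer_succ_left]
    rw [h1, descPochhammer_succ_eval]
    have : ∑ a, (n a : ℂ) * ((x + r a) * (descPochhammer ℂ M).eval (x+y-1))
      = (x * ∑ a, (n a : ℂ) + y) * (descPochhammer ℂ M).eval (x+y-1) := by
      rw [hy, Finset.mul_sum, ← Finset.sum_add_distrib, Finset.sum_mul]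
      refine Finset.sum_congr rfl fun a _ => by ring
    rw [this, hn']
    push_cast
    ring

/-- degree N part of exp(x v) -/
noncomputable def Qp {k : ℕ} (r s : Fin k → ℂ) (N : ℕ) : ℂ[X] :=
  ∑ n ∈ Finset.univ.finsuppAntidiag N,
    C ((∏ a : Fin k, s a ^ (n a)) / ∏ a : Fin k, ((n a).factorial : ℂ)) *
      Gp (∑ a, r a * (n a : ℂ)) N

lemma Qp_step {k : ℕ} (r s : Fin k → ℂ) (M : ℕ) (x : ℂ) :
    (Qp r s (M+1)).eval (x+1) - (Qp r s (M+1)).eval x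
      = ∑ a, s a * (Qp r s M).eval (x + r a) := by
  have key : ∀ a, s a * (Qp r s M).eval (x + r a) =
      ∑ n ∈ (Finset.univ : Finset (Fin k)).finsuppAntidiag (M+1),
        ((∏ a : Fin k, s a ^ (n a)) / ∏ a : Fin k, ((n a).factorial : ℂ)) *
        ((n a : ℂ) * (Gp ((∑ a, r a * (n a : ℂ)) - r a) M).eval (x + r a)) := by
    intro a
    have heq : ∀ m : Fin k →₀ ℕ,
        s a * (C ((∏ a : Fin k, s a ^ (m a)) / ∏ a : Fin k, ((m a).factorial : ℂ)) *
          Gp (∑ a, r a * (m a : ℂ)) M).eval (x + r a) =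
        ((∏ b : Fin k, s b ^ ((m + Finsupp.single a 1 : Fin k →₀ ℕ) b)) /
          ∏ b : Fin k, (((m + Finsupp.single a 1 : Fin k →₀ ℕ) b).factorial : ℂ)) *
        (((m + Finsupp.single a 1 : Fin k →₀ ℕ) a : ℂ) *
          (Gp ((∑ b, r b * ((m + Finsupp.single a 1 : Fin k →₀ ℕ) b : ℂ)) - r a) M).eval
            (x + r a)) := by
      intro m
      have h1 : ∏ b : Fin k, s b ^ ((m + Finsupp.single a 1 : Fin k →₀ ℕ) b)
          = (∏ b, s b ^ m b) * s a := by
        simp only [Finsupp.add_apply, pow_add]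
        rw [Finset.prod_mul_distrib]
        congr 1
        simp [Finsupp.single_apply, pow_ite]
      have h2 : ∏ b : Fin k, (((m + Finsupp.single a 1 : Fin k →₀ ℕ) b).factorial : ℂ)
          = (∏ b, ((m b).factorial : ℂ)) * (m a + 1) := by
        have : ∀ b, (((m + Finsupp.single a 1 : Fin k →₀ ℕ) b).factorial : ℂ)
            = ((m b).factorial : ℂ) * (if a = b then (m b + 1 : ℂ) else 1) := by
          intro b
          by_cases hb : a = b
          · subst hb
            simp [Nat.factorial_succ, mul_comm]
          · simp [hb]
        simp_rw [this]
        rw [Finset.prod_mul_distrib]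
        simp
      have h3 : (∑ b, r b * ((m + Finsupp.single a 1 : Fin k →₀ ℕ) b : ℂ))
          = (∑ b, r b * (m b : ℂ)) + r a := by
        simp [mul_add, Finset.sum_add_distrib, Finsupp.single_apply]
      have h4 : (∏ b, ((m b).factorial : ℂ)) ≠ 0 :=
        Finset.prod_ne_zero_iff.2 fun b _ => by exact_mod_cast (m b).factorial_ne_zero
      have h5 : (m a + 1 : ℂ) ≠ 0 := by exact_mod_cast (m a).succ_ne_zero
      rw [h1, h2, h3]
      simp only [eval_mul, eval_C, add_sub_cancel_right, Finsupp.add_apply, Finsupp.single_eq_same]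
      push_cast
      field_simp
    rw [Qp, eval_finsetSum, Finset.mul_sum]
    refine Finset.sum_bij_ne_zero (fun m _ _ => m + Finsupp.single a 1) ?_ ?_ ?_ ?_
    · intro m hm _
      simp only [Finset.mem_finsuppAntidiag, Finset.subset_univ, and_true] at hm ⊢
      have : ∑ i, (m + Finsupp.single a 1 : Fin k →₀ ℕ) i = ∑ i, m i + 1 := by
        simp [Finset.sum_add_distrib, Finsupp.single_apply]
      exact this.trans (congrArg (· + 1) hm)
    · intro m _ _ m' _ _ h
      exact add_right_cancel h
    · intro n hn hne
      have hna : n a ≠ 0 := by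
        intro h
        simp [h] at hne
      have hn2 : n - Finsupp.single a 1 + Finsupp.single a 1 = n := by
        refine tsub_add_cancel_of_le ?_
        simp only [Finsupp.single_le_iff]
        omega
      have hm : n - Finsupp.single a 1 ∈ (Finset.univ : Finset (Fin k)).finsuppAntidiag M := by
        simp only [Finset.mem_finsuppAntidiag, Finset.subset_univ, and_true] at hn ⊢
        have : ∑ i, (n - Finsupp.single a 1 + Finsupp.single a 1 : Fin k →₀ ℕ) i
            = ∑ i, (n - Finsupp.single a 1 : Fin k →₀ ℕ) i + 1 := by
          simp only [Finsupp.add_apply, Finset.sum_add_distrib, Finsupp.single_apply]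
          simp
        rw [hn2] at this
        exact Nat.add_right_cancel (this.symm.trans hn)
      refine ⟨n - Finsupp.single a 1, hm, ?_, hn2⟩
      rw [heq, hn2]
      exact hne
    · intro m _ _
      exact heq m
  simp_rw [key]
  rw [Finset.sum_comm, Qp, eval_finsetSum, eval_finsetSum, ← Finset.sum_sub_distrib]
  refine Finset.sum_congr rfl fun n hn => ?_
  simp only [Finset.mem_finsuppAntidiag, Finset.subset_univ, and_true] at hn
  rw [← Finset.mul_sum, ← Gp_step r n M hn x _ rfl]
  simp only [eval_mul, eval_C]
  ring

lemma poly_eq_of_step (p q : ℂ[X]) (h0 : p.eval 0 = q.eval 0)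
    (h : ∀ x, p.eval (x+1) - p.eval x = q.eval (x+1) - q.eval x) : p = q := by
  have : ∀ n : ℕ, p.eval (n : ℂ) = q.eval (n : ℂ) := by
    intro n
    induction n with
    | zero => simpa using h0
    | succ n ih =>
      have := h n
      push_cast
      linear_combination this + ih
  refine Polynomial.eq_of_infinite_eval_eq p q ?_
  refine (Set.infinite_range_of_injective (Nat.cast_injective (R := ℂ))).mono ?_
  rintro _ ⟨n, rfl⟩
  exact this n

lemma exists_poly (w : ℂ → ℂ) (hw : AnalyticAt ℂ w 0) (hw0 : w 0 = 0) (N : ℕ) :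
    ∃ p : ℂ[X], (∀ x : ℂ, iteratedDeriv N (fun t => Complex.exp (x * w t)) 0 = p.eval x) ∧
      p.derivative.eval 0 = iteratedDeriv N w 0 := by
  induction N using Nat.strong_induction_on with
  | _ N ih =>
  cases N with
  | zero => exact ⟨1, by simp [hw0], by simp [hw0]⟩
  | succ N =>
    choose! p hp hp' using ih
    have hp0 : ∀ M < N + 1, (p M).eval 0 = if M = 0 then 1 else 0 := by
      intro M hM
      rw [← hp M hM 0]
      simp [iteratedDeriv_const]
    refine ⟨X * ∑ i ∈ Finset.range (N+1),
      C ((N.choose i : ℂ) * iteratedDeriv i (deriv w) 0) * p (N - i), fun x => ?_, ?_⟩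
    · have hE : AnalyticAt ℂ (fun t => Complex.exp (x * w t)) 0 :=
        (analyticAt_const.mul hw).cexp
      have hd : deriv (fun t => Complex.exp (x * w t)) =ᶠ[nhds 0]
          fun t => x * (deriv w t * Complex.exp (x * w t)) := by
        filter_upwards [hw.eventually_analyticAt] with t ht
        have := ((ht.differentiableAt.hasDerivAt.const_mul x).cexp).deriv
        rw [this]; ring
      rw [iteratedDeriv_succ', hd.iteratedDeriv_eq, iteratedDeriv_const_mul_field,
        iteratedDeriv_fun_mul hw.deriv.contDiffAt hE.contDiffAt]
      simp only [eval_mul, eval_X, eval_finsetSum, eval_C]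
      congr 1
      refine Finset.sum_congr rfl fun i hi => ?_
      rw [hp (N - i) (by omega)]
    · rw [derivative_mul]
      simp only [derivative_X, one_mul, eval_add, eval_mul, eval_X, zero_mul, add_zero,
        eval_finsetSum, eval_C]
      rw [Finset.sum_eq_single N, iteratedDeriv_succ']
      · simp [hp0 0 (by omega)]
      · intro i hi hne
        have : i < N + 1 := Finset.mem_range.1 hi
        rw [hp0 (N - i) (by omega), if_neg (by omega), mul_zero]
      · simp

lemma iteratedDeriv_t_mul (f : ℂ → ℂ) (hf : AnalyticAt ℂ f 0) (N : ℕ) :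
    iteratedDeriv (N+1) (fun t => t * f t) 0 = (N + 1) * iteratedDeriv N f 0 := by
  rw [iteratedDeriv_fun_mul (contDiffAt_fun_id) hf.contDiffAt, Finset.sum_eq_single 1]
  · simp [iteratedDeriv_fun_id_zero]
  · intro i _ hi
    simp [iteratedDeriv_fun_id_zero, hi]
  · simp

lemma coeff_eq {k : ℕ} (r s : Fin k → ℂ) (w : ℂ → ℂ) (hw : AnalyticAt ℂ w 0) (hw0 : w 0 = 0)
    (he : ∀ᶠ t in nhds (0 : ℂ),
      1 - Complex.exp (w t) + ∑ a : Fin k, (t * s a) * Complex.exp (r a * w t) = 0) (N : ℕ) :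
    iteratedDeriv N w 0 = N.factorial * (Qp r s N).derivative.eval 0 := by
  choose p hp hp' using exists_poly w hw hw0
  have hE : ∀ x, AnalyticAt ℂ (fun t => Complex.exp (x * w t)) 0 := fun x =>
        (analyticAt_const.mul hw).cexp
  have hstep : ∀ N x, (p (N+1)).eval (x+1) - (p (N+1)).eval x
      = (N + 1) * ∑ a, s a * (p N).eval (x + r a) := by
    intro N x
    simp only [← hp]
    have h1 : (fun t => Complex.exp ((x + 1) * w t)) =ᶠ[nhds 0]
        fun t => Complex.exp (x * w t) + t * ∑ a, s a * Complex.exp ((x + r a) * w t) := by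
      filter_upwards [he] with t ht
      have e1 : Complex.exp ((x + 1) * w t) = Complex.exp (x * w t) * Complex.exp (w t) := by
        rw [← Complex.exp_add]; ring_nf
      have e2 : ∀ a, s a * Complex.exp ((x + r a) * w t)
          = Complex.exp (x * w t) * (s a * Complex.exp (r a * w t)) := by
        intro a
        rw [add_mul, Complex.exp_add]; ring
      have e3 : Complex.exp (w t) = 1 + t * ∑ a, s a * Complex.exp (r a * w t) := by
        rw [Finset.mul_sum]
        simp only [← mul_assoc]
        linear_combination -ht
      simp only [e1, e2, ← Finset.mul_sum]
      rw [e3]; ring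
    have hS : AnalyticAt ℂ (fun t => ∑ a, s a * Complex.exp ((x + r a) * w t)) 0 :=
      Finset.analyticAt_fun_sum _ fun a _ => analyticAt_const.mul (hE _)
    rw [h1.iteratedDeriv_eq, iteratedDeriv_fun_add (hE x).contDiffAt
      (show AnalyticAt ℂ (fun t : ℂ => t * _) 0 from analyticAt_id.fun_mul hS).contDiffAt, add_sub_cancel_left]
    rw [iteratedDeriv_t_mul _ hS, iteratedDeriv_fun_sum
      (f := fun a t => s a * Complex.exp ((x + r a) * w t)) fun a _ =>
      (analyticAt_const.mul (hE (x + r a))).contDiffAt]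
    simp only [iteratedDeriv_const_mul_field]
  have hpq : ∀ N, p N = C (N.factorial : ℂ) * Qp r s N := by
    intro N
    induction N with
    | zero =>
      refine Polynomial.funext fun x => ?_
      rw [← hp]
      simp [hw0, Qp, Gp]
    | succ N ih =>
      refine poly_eq_of_step _ _ ?_ fun x => ?_
      · rw [← hp]
        simp [iteratedDeriv_const, Qp, eval_finsetSum, Gp]
      · rw [hstep, ih]
        simp only [eval_mul, eval_C, ← mul_sub, Qp_step, Nat.factorial_succ]
        push_cast
        rw [mul_assoc]
        congr 1
        rw [Finset.mul_sum]
        exact Finset.sum_congr rfl fun a _ => by ring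
  rw [← hp', hpq]
  simp

lemma Qp_deriv {k : ℕ} (r s : Fin k → ℂ) (N : ℕ) :
    (Qp r s N).derivative.eval 0
      = ∑ n ∈ (Finset.univ : Finset (Fin k)).finsuppAntidiag N, cf r n * ∏ a, s a ^ n a := by
  rw [Qp, derivative_sum, eval_finsetSum]
  refine Finset.sum_congr rfl fun n hn => ?_
  simp only [Finset.mem_finsuppAntidiag, Finset.subset_univ, and_true] at hn
  have hn' : ∑ a, n a = N := hn
  cases N with
  | zero =>
    have : n = 0 := by
      ext a
      simpa using Finset.sum_eq_zero_iff.1 hn' a (Finset.mem_univ a)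
    simp [Gp, cf, this]
  | succ N =>
    have : n ≠ 0 := by
      rintro rfl
      simp at hn'
    simp only [cf, if_neg this, Gp, hn']
    simp only [derivative_mul, derivative_C, derivative_X, eval_mul, eval_add, eval_C, eval_X,
      eval_comp, zero_mul, zero_add, one_mul, add_zero, Nat.add_sub_cancel]
    ring

theorem statement3 (k : ℕ) (hk : 1 ≤ k) (r : Fin k → ℂ) :
    ∃ (U : Set (Fin k → ℂ)) (v : (Fin k → ℂ) → ℂ),
      IsOpen U ∧ (0 : Fin k → ℂ) ∈ U ∧ DifferentiableOn ℂ v U ∧ v 0 = 0 ∧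
      (∀ s ∈ U, 1 - Complex.exp (v s) + ∑ a : Fin k, s a * Complex.exp (r a * v s) = 0) ∧
      AnalyticAt ℂ v 0 ∧
      (∀ᶠ s in nhds (0 : Fin k → ℂ), HasSum
        (fun n : Fin k →₀ ℕ =>
          (if n = 0 then (0 : ℂ)
            else (descPochhammer ℂ ((∑ a : Fin k, n a) - 1)).eval
                  ((∑ a : Fin k, r a * (n a : ℂ)) - 1) / ∏ a : Fin k, ((n a).factorial : ℂ))
            * ∏ a : Fin k, s a ^ n a)
        (v s)) := by
  obtain ⟨v, hv, hv0, he⟩ := exists_implicit k r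
  obtain ⟨ε, hε, hball⟩ := Metric.eventually_nhds_iff_ball.1 (he.and hv.eventually_analyticAt)
  refine ⟨Metric.ball 0 ε, v, Metric.isOpen_ball, Metric.mem_ball_self hε,
    fun s hs => (hball s hs).2.differentiableAt.differentiableWithinAt, hv0,
    fun s hs => (hball s hs).1, hv, ?_⟩
  filter_upwards [summable_cf r, Metric.ball_mem_nhds (0 : Fin k → ℂ) (half_pos hε)]
    with s hsum hs
  change HasSum (fun n : Fin k →₀ ℕ => cf r n * ∏ a : Fin k, s a ^ n a) (v s)
  have hs2 : ‖s‖ < ε / 2 := mem_ball_zero_iff.1 hs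
  have hmem : ∀ t ∈ Metric.ball (0 : ℂ) 2, t • s ∈ Metric.ball (0 : Fin k → ℂ) ε := by
    intro t ht
    rw [mem_ball_zero_iff] at ht ⊢
    rw [norm_smul]
    nlinarith [norm_nonneg s, norm_nonneg t]
  set w : ℂ → ℂ := fun t => v (t • s) with hwdef
  have hlin : ∀ t : ℂ, DifferentiableAt ℂ (fun t : ℂ => t • s) t := fun t => by fun_prop
  have hw : DifferentiableOn ℂ w (Metric.ball 0 2) := fun t ht =>
    (DifferentiableAt.comp t (hball _ (hmem t ht)).2.differentiableAt
      (hlin t)).differentiableWithinAt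
  have hwa : AnalyticAt ℂ w 0 := hw.analyticAt (Metric.ball_mem_nhds 0 (by norm_num))
  have hw0 : w 0 = 0 := by simp [hwdef, hv0]
  have hwe : ∀ᶠ t in nhds (0 : ℂ),
      1 - Complex.exp (w t) + ∑ a : Fin k, (t * s a) * Complex.exp (r a * w t) = 0 := by
    filter_upwards [Metric.ball_mem_nhds (0 : ℂ) (show (0 : ℝ) < 2 by norm_num)] with t ht
    simpa using (hball _ (hmem t ht)).1
  have hT := Complex.hasSum_taylorSeries_on_ball hw (z := 1) (by simp)
  have hw1 : w 1 = v s := by simp [hwdef]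
  rw [hw1] at hT
  have hF := hsum.hasSum.tsum_fiberwise (fun n : Fin k →₀ ℕ => ∑ a, n a)
  have hfun : (fun N : ℕ => (N.factorial : ℂ)⁻¹ • ((1 : ℂ) - 0) ^ N • iteratedDeriv N w 0) =
      fun N : ℕ => ∑' n : ((fun n : Fin k →₀ ℕ => ∑ a, n a) ⁻¹' {N}),
        cf r n.1 * ∏ a : Fin k, s a ^ n.1 a := by
    funext N
    have hset : ((fun n : Fin k →₀ ℕ => ∑ a, n a) ⁻¹' {N}) =
        ((Finset.univ : Finset (Fin k)).finsuppAntidiag N : Set (Fin k →₀ ℕ)) := by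
      ext n
      simp
    rw [hset, Finset.tsum_subtype' _ (fun n : Fin k →₀ ℕ => cf r n * ∏ a : Fin k, s a ^ n a),
      ← Qp_deriv, coeff_eq r s w hwa hw0 hwe]
    have : (N.factorial : ℂ) ≠ 0 := by exact_mod_cast N.factorial_ne_zero
    simp [this]
  rw [hfun] at hT
  rw [hT.unique hF]
  exact hsum.hasSum
end

section
/- Let k ≥ 0 and let ε_0, …, ε_k be rational numbers. For y ∈ ℂ with Re(−y) > 0 and a ∈ {0, …, k}, define y^{ε_a} := exp(ε_a · (πi + Log(−y))), where Log is the principal branch of the complex logarithm, and define H(y, q̃_0, …, q̃_k) := 1 + y + Σ_{a=0}^k q̃_a · y^{ε_a}. Then there exist an open neighborhood V of 0 in ℂ^{k+1} and a holomorphic function y : V → ℂ such that y(0) = −1 and H(y(q̃), q̃) = 0 for all q̃ ∈ V. Moreover y(q̃) is the sum of a power series in q̃_0, …, q̃_k convergent on a neighborhood of 0 with constant term −1, and q̃ ↦ πi + Log(−y(q̃)) is the sum of a convergent power series with constant term πi. -/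
open scoped BigOperators

/-- for rational numbers `ε₀, …, ε_k`, with
`y^{εₐ} := exp(εₐ (πi + Log(−y)))` (principal branch of log, i.e. the branch of `log y`
with `log(−1) = πi`) and `H(y, q̃) := 1 + y + ∑ₐ q̃ₐ y^{εₐ}`, there exist an open
neighborhood `V` of `0` in `ℂ^{k+1}` and a holomorphic `y : V → ℂ` with `y(0) = −1` and
`H(y(q̃), q̃) = 0` on `V`; moreover `y` is the sum of a convergent power series at `0`
(with constant term `−1`, since `y(0) = −1`), and `q̃ ↦ πi + Log(−y(q̃))` is the sum of a
convergent power series with constant term `πi`. -/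
theorem statement4 (k : ℕ) (ε : Fin (k + 1) → ℚ) :
    ∃ (V : Set (Fin (k + 1) → ℂ)) (y : (Fin (k + 1) → ℂ) → ℂ),
      IsOpen V ∧ (0 : Fin (k + 1) → ℂ) ∈ V ∧ DifferentiableOn ℂ y V ∧ y 0 = -1 ∧
      (∀ q ∈ V, 1 + y q + ∑ a : Fin (k + 1),
          q a * Complex.exp ((ε a : ℂ) * ((Real.pi : ℂ) * Complex.I
            + Complex.log (-(y q)))) = 0) ∧
      AnalyticAt ℂ y 0 ∧
      AnalyticAt ℂ (fun q => (Real.pi : ℂ) * Complex.I + Complex.log (-(y q))) 0 ∧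
      (Real.pi : ℂ) * Complex.I + Complex.log (-(y 0)) = (Real.pi : ℂ) * Complex.I := by
  set f : (Fin (k + 1) → ℂ) × ℂ → ℂ := fun p => 1 + p.2 + ∑ a : Fin (k + 1),
    p.1 a * Complex.exp ((ε a : ℂ) * ((Real.pi : ℂ) * Complex.I + Complex.log (-p.2))) with hf
  have hfa : AnalyticAt ℂ f (0, -1) := by
    have hsnd : AnalyticAt ℂ (fun p : (Fin (k + 1) → ℂ) × ℂ => p.2) (0, -1) := analyticAt_snd
    have hlog : AnalyticAt ℂ (fun p : (Fin (k + 1) → ℂ) × ℂ => Complex.log (-p.2)) (0, -1) :=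
      hsnd.neg.clog (by simp)
    refine (analyticAt_const.add hsnd).add (Finset.analyticAt_fun_sum _ fun a _ => ?_)
    refine AnalyticAt.mul ?_ (analyticAt_const.mul (analyticAt_const.add hlog)).cexp'
    exact ((ContinuousLinearMap.proj (R := ℂ) (φ := fun _ : Fin (k + 1) => ℂ) a).comp
      (ContinuousLinearMap.fst ℂ (Fin (k + 1) → ℂ) ℂ)).analyticAt _
  have hf0 : f (0, -1) = 0 := by simp [hf]
  have hinr : fderiv ℂ f (0, -1) ∘L .inr ℂ (Fin (k + 1) → ℂ) ℂ = .id ℂ ℂ := by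
    have h1 : HasFDerivAt (fun y : ℂ => f (0, y))
        (fderiv ℂ f (0, -1) ∘L .inr ℂ (Fin (k + 1) → ℂ) ℂ) (-1) :=
      HasFDerivAt.comp (-1 : ℂ) (f := fun y : ℂ => ((0 : Fin (k + 1) → ℂ), y))
        hfa.differentiableAt.hasFDerivAt (hasFDerivAt_prodMk_right 0 (-1))
    have h2 : HasFDerivAt (fun y : ℂ => f (0, y)) (.id ℂ ℂ) (-1) := by
      have : (fun y : ℂ => f (0, y)) = fun y => 1 + y := by ext y; simp [hf]
      rw [this]
      exact (hasFDerivAt_id _).const_add 1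
    exact h1.unique h2
  have hinv : (fderiv ℂ f (0, -1) ∘L .inr ℂ (Fin (k + 1) → ℂ) ℂ).IsInvertible := by
    rw [hinr]; exact ⟨.refl ℂ ℂ, rfl⟩
  have hc : ContDiffAt ℂ ⊤ f (0, -1) := hfa.contDiffAt
  have hn : (⊤ : WithTop ℕ∞) ≠ 0 := by simp
  set y := hc.implicitFunction hn hinv
  have hy0 : y 0 = -1 := hc.implicitFunction_apply_self hn hinv
  have hya : AnalyticAt ℂ y 0 := (hc.contDiffAt_implicitFunction hn hinv).analyticAt
  have hev : ∀ᶠ x in nhds (0 : Fin (k + 1) → ℂ), f (x, y x) = f (0, -1) :=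
    hc.eventually_apply_implicitFunction hn hinv
  obtain ⟨V, hV, hVo, h0⟩ := eventually_nhds_iff.mp (hev.and hya.eventually_analyticAt)
  refine ⟨V, y, hVo, h0, fun q hq => (hV q hq).2.differentiableAt.differentiableWithinAt, hy0,
    fun q hq => ((hV q hq).1.trans hf0), hya, ?_, by simp [hy0]⟩
  exact analyticAt_const.add (hya.neg.clog (by simp [hy0]))
end

section
/- Let k ≥ 0 and let ε_0, …, ε_k be rational numbers. Let y(q̃) be the holomorphic function on a neighborhood of 0 in ℂ^{k+1} with y(0) = −1 satisfying 1 + y(q̃) + Σ_{a=0}^k q̃_a · exp(ε_a (πi + Log(−y(q̃)))) = 0. Then on a neighborhood of 0 one has the absolutely convergent expansion Log(−y(q̃)) = Σ_{(n_0,…,n_k) ≠ 0} [ (ε_0 n_0 + ⋯ + ε_k n_k − 1)_{(n_0 + ⋯ + n_k − 1)} / (n_0! ⋯ n_k!) ] · Π_{a=0}^k (e^{πi ε_a} q̃_a)^{n_a}, the sum running over nonzero multi-indices (n_0, …, n_k) ∈ ℤ_{≥0}^{k+1}. -/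
open scoped BigOperators

noncomputable def s5A {k : ℕ} (ε : Fin (k+1) → ℂ) (α : ℂ) (n : Fin (k+1) →₀ ℕ) : ℂ :=
  if n = 0 then 1 else
    α * (descPochhammer ℂ ((∑ a, n a) - 1)).eval ((∑ a, ε a * (n a : ℂ)) + α - 1) /
      ∏ a, ((n a).factorial : ℂ)

noncomputable def s5c {k : ℕ} (ε : Fin (k+1) → ℂ) (n : Fin (k+1) →₀ ℕ) : ℂ :=
  if n = 0 then 0 else
    (descPochhammer ℂ ((∑ a, n a) - 1)).eval ((∑ a, ε a * (n a : ℂ)) - 1) /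
      ∏ a, ((n a).factorial : ℂ)

lemma s5_sum_pos {k : ℕ} (n : Fin (k+1) →₀ ℕ) (h : n ≠ 0) : 1 ≤ ∑ a, n a := by
  by_contra hc
  apply h
  ext a
  have : ∑ a, n a = 0 := by omega
  simpa using (Finset.sum_eq_zero_iff.mp this) a (Finset.mem_univ a)

lemma s5_sub_fact {k : ℕ} (n : Fin (k+1) →₀ ℕ) (a : Fin (k+1)) (h : 1 ≤ n a) :
    ∏ b, ((n b).factorial : ℂ) =
      (n a : ℂ) * ∏ b, (((n - Finsupp.single a 1 : Fin (k+1) →₀ ℕ) b).factorial : ℂ) := by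
  rw [← Finset.mul_prod_erase _ _ (Finset.mem_univ a),
    ← Finset.mul_prod_erase _ (fun b => (((n - Finsupp.single a 1 : Fin (k+1) →₀ ℕ) b).factorial : ℂ))
      (Finset.mem_univ a), ← mul_assoc]
  congr 1
  · obtain ⟨m, hm⟩ : ∃ m, n a = m + 1 := ⟨n a - 1, by omega⟩
    simp [hm, Nat.factorial_succ]
  · refine Finset.prod_congr rfl fun b hb => ?_
    have : b ≠ a := (Finset.mem_erase.mp hb).1
    simp [this.symm]

lemma s5_rec {k : ℕ} (ε : Fin (k+1) → ℂ) (α : ℂ) (n : Fin (k+1) →₀ ℕ) :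
    s5A ε (α + 1) n = s5A ε α n +
      ∑ a, if Finsupp.single a 1 ≤ n then s5A ε (α + ε a) (n - Finsupp.single a 1) else 0 := by
  by_cases h : n = 0
  · subst h
    simp [s5A]
  have hpos := s5_sum_pos n h
  have hfact : (∏ b, ((n b).factorial : ℂ)) ≠ 0 :=
    Finset.prod_ne_zero_iff.mpr fun b _ => by exact_mod_cast Nat.factorial_ne_zero _
  have hN : ∀ a, 1 ≤ n a → (∑ b, (n - Finsupp.single a 1 : Fin (k+1) →₀ ℕ) b) + 1 = ∑ b, n b := by
    intro a ha
    have : n = (n - Finsupp.single a 1) + Finsupp.single a 1 := by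
      rw [tsub_add_cancel_of_le]; simpa using ha
    conv_rhs => rw [this]
    simp only [Finsupp.add_apply, Finset.sum_add_distrib]
    simp [Finsupp.single_apply]
  have hs : ∀ a, 1 ≤ n a → (∑ b, ε b * ((n - Finsupp.single a 1 : Fin (k+1) →₀ ℕ) b : ℂ)) + ε a
      = ∑ b, ε b * (n b : ℂ) := by
    intro a ha
    have : n = (n - Finsupp.single a 1) + Finsupp.single a 1 := by
      rw [tsub_add_cancel_of_le]; simpa using ha
    conv_rhs => rw [this]
    simp only [Finsupp.add_apply, Nat.cast_add, mul_add, Finset.sum_add_distrib]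
    simp [Finsupp.single_apply]
  obtain ⟨M, hM⟩ : ∃ M, ∑ a, n a = M + 1 := ⟨(∑ a, n a) - 1, by omega⟩
  set s : ℂ := ∑ a, ε a * (n a : ℂ) with hsdef
  rcases M with _ | M
  · obtain ⟨b, hb⟩ : ∃ b, n b ≠ 0 := by
      by_contra hc
      push Not at hc
      simp [hc] at hM
    have hb1 : 1 ≤ n b := by omega
    have h0 : n - Finsupp.single b 1 = 0 := by
      have := hN b hb1
      by_contra hc
      have := s5_sum_pos _ hc
      omega
    have hn : n = Finsupp.single b 1 := by
      have : n = (n - Finsupp.single b 1) + Finsupp.single b 1 := by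
        rw [tsub_add_cancel_of_le]; simpa using hb1
      rw [this, h0, zero_add]
    have hf : (∏ c, ((n c).factorial : ℂ)) = 1 := by
      refine Finset.prod_eq_one fun c _ => ?_
      rw [hn, Finsupp.single_apply]; split_ifs <;> simp
    rw [Finset.sum_eq_single b]
    · rw [if_pos (by simpa using hb1), h0]
      simp only [s5A, if_neg h, hM, hf]
      simp
    · intro a _ hab
      rw [if_neg]
      rw [Finsupp.single_le_iff, hn, Finsupp.single_apply, if_neg (Ne.symm hab)]
      omega
    · simp
  · have hterm : ∀ a, (if Finsupp.single a 1 ≤ n then s5A ε (α + ε a) (n - Finsupp.single a 1)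
        else 0) = (n a : ℂ) * (α + ε a) * (descPochhammer ℂ M).eval (s + α - 1) /
          ∏ b, ((n b).factorial : ℂ) := by
      intro a
      by_cases ha : 1 ≤ n a
      · rw [if_pos (by simpa using ha)]
        have h1 := hN a ha
        have h2 : n - Finsupp.single a 1 ≠ 0 := by
          intro h0
          rw [h0] at h1
          simp at h1
          omega
        have h3 := hs a ha
        have h4 : (∑ b, ε b * ((n - Finsupp.single a 1 : Fin (k+1) →₀ ℕ) b : ℂ)) + (α + ε a) - 1 = s + α - 1 := by
          rw [← h3]; ring
        have h5 : (∑ b, (n - Finsupp.single a 1 : Fin (k+1) →₀ ℕ) b) - 1 = M := by omega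
        have h6 := s5_sub_fact n a ha
        rw [s5A, if_neg h2, h4, h5, h6]
        rw [h6] at hfact
        have h7 := left_ne_zero_of_mul hfact
        have h8 := right_ne_zero_of_mul hfact
        field_simp
      · have : n a = 0 := by omega
        rw [if_neg (by simpa using ha), this]
        simp
    rw [Finset.sum_congr rfl fun a _ => hterm a]
    have hsum : ∑ a, (n a : ℂ) * (α + ε a) = (M + 2) * α + s := by
      simp only [mul_add, Finset.sum_add_distrib, ← Finset.sum_mul]
      rw [← Nat.cast_sum, hM, hsdef]
      push_cast
      congr 1
      · ring
      · exact Finset.sum_congr rfl fun _ _ => mul_comm _ _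
    rw [← Finset.sum_div, ← Finset.sum_mul, hsum]
    simp only [s5A, if_neg h, hM, Nat.add_sub_cancel]
    rw [← hsdef]
    have e1 : (descPochhammer ℂ (M+1)).eval (s + α - 1) =
        (descPochhammer ℂ M).eval (s + α - 1) * (s + α - 1 - M) := by
      simp [descPochhammer_succ_right]
    have e2 : (descPochhammer ℂ (M+1)).eval (s + (α + 1) - 1) =
        (s + α) * (descPochhammer ℂ M).eval (s + α - 1) := by
      rw [descPochhammer_succ_left]
      simp only [Polynomial.eval_mul, Polynomial.eval_X, Polynomial.eval_comp,
        Polynomial.eval_sub, Polynomial.eval_one]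
      ring_nf
    rw [e1, e2]
    field_simp
    ring

noncomputable def s5E {k : ℕ} (ε : Fin (k+1) → ℂ) (α : ℂ) : MvPowerSeries (Fin (k+1)) ℂ :=
  fun n => s5A ε α n

lemma s5E_coeff {k : ℕ} (ε : Fin (k+1) → ℂ) (α : ℂ) (n) :
    MvPowerSeries.coeff n (s5E ε α) = s5A ε α n := rfl

lemma s5E_rec {k : ℕ} (ε : Fin (k+1) → ℂ) (α : ℂ) :
    s5E ε (α + 1) = s5E ε α + ∑ a, MvPowerSeries.X a * s5E ε (α + ε a) := by
  ext n
  rw [map_add, map_sum, s5E_coeff, s5E_coeff, s5_rec]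
  congr 1
  refine Finset.sum_congr rfl fun a _ => ?_
  rw [MvPowerSeries.X, MvPowerSeries.coeff_monomial_mul]
  simp [s5E_coeff]

lemma s5E_zero {k : ℕ} (ε : Fin (k+1) → ℂ) : s5E ε 0 = 1 := by
  ext n
  rw [s5E_coeff, MvPowerSeries.coeff_one]
  simp [s5A]

lemma s5A_poly {k : ℕ} (ε : Fin (k+1) → ℂ) (n : Fin (k+1) →₀ ℕ) :
    ∃ p : Polynomial ℂ, ∀ α, s5A ε α n = p.eval α := by
  by_cases h : n = 0
  · exact ⟨1, fun α => by simp [s5A, h]⟩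
  · refine ⟨Polynomial.C (∏ a, ((n a).factorial : ℂ))⁻¹ * (Polynomial.X *
      (descPochhammer ℂ ((∑ a, n a) - 1)).comp
        (Polynomial.X + Polynomial.C ((∑ a, ε a * (n a : ℂ)) - 1))), fun α => ?_⟩
    simp only [s5A, if_neg h, Polynomial.eval_mul, Polynomial.eval_C, Polynomial.eval_X,
      Polynomial.eval_comp, Polynomial.eval_add]
    rw [div_eq_inv_mul]
    congr 4
    ring

lemma s5E_mul {k : ℕ} (ε : Fin (k+1) → ℂ) (α β : ℂ) :
    s5E ε α * s5E ε β = s5E ε (α + β) := by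
  set D : ℂ → MvPowerSeries (Fin (k+1)) ℂ := fun α => s5E ε α * s5E ε β - s5E ε (α + β) with hD
  have hrec : ∀ α, D (α + 1) = D α + ∑ a, MvPowerSeries.X a * D (α + ε a) := by
    intro α
    have h1 : α + 1 + β = (α + β) + 1 := by ring
    have h2 : ∀ a, α + ε a + β = (α + β) + ε a := fun a => by ring
    simp only [hD, h1, h2, s5E_rec, mul_sub, Finset.sum_sub_distrib, add_mul, Finset.sum_mul,
      mul_assoc]
    abel
  have h0 : D 0 = 0 := by simp [hD, s5E_zero]
  have hpoly : ∀ n, ∃ p : Polynomial ℂ, ∀ α, MvPowerSeries.coeff n (D α) = p.eval α := by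
    intro n
    choose p hp using s5A_poly ε
    refine ⟨∑ ij ∈ Finset.HasAntidiagonal.antidiagonal n, p ij.1 * Polynomial.C (s5A ε β ij.2) -
      (p n).comp (Polynomial.X + Polynomial.C β), fun α => ?_⟩
    simp only [hD, map_sub, MvPowerSeries.coeff_mul, s5E_coeff, Polynomial.eval_sub,
      Polynomial.eval_finsetSum, Polynomial.eval_mul, Polynomial.eval_C, Polynomial.eval_comp,
      Polynomial.eval_add, Polynomial.eval_X, hp]
  have key : ∀ N : ℕ, ∀ n : Fin (k+1) →₀ ℕ, n.degree = N → ∀ α,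
      MvPowerSeries.coeff n (D α) = 0 := by
    intro N
    induction N with
    | zero =>
      intro n hn α
      have : n = 0 := (Finsupp.degree_eq_zero_iff n).mp hn
      subst this
      have h1 : ∀ α, MvPowerSeries.constantCoeff (s5E ε α) = 1 := fun α => by
        rw [← MvPowerSeries.coeff_zero_eq_constantCoeff_apply, s5E_coeff]
        simp [s5A]
      simp [hD, h1]
    | succ N ih =>
      intro n hn
      obtain ⟨p, hp⟩ := hpoly n
      have step : ∀ α, MvPowerSeries.coeff n (D (α + 1)) = MvPowerSeries.coeff n (D α) := by
        intro α
        rw [hrec, map_add, map_sum, Finset.sum_eq_zero, add_zero]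
        intro a _
        rw [MvPowerSeries.X, MvPowerSeries.coeff_monomial_mul]
        split_ifs with h
        · rw [ih, mul_zero]
          have : n = (n - Finsupp.single a 1) + Finsupp.single a 1 := by
            rw [tsub_add_cancel_of_le h]
          rw [this, map_add] at hn
          simpa using hn
        · rfl
      have hnat : ∀ m : ℕ, p.eval (m : ℂ) = 0 := by
        intro m
        induction m with
        | zero => rw [← hp]; simp [h0]
        | succ m ihm => rw [← hp, Nat.cast_succ, step, hp, ihm]
      have : p = 0 := by
        apply Polynomial.eq_zero_of_infinite_isRoot
        refine Set.Infinite.mono ?_ (Set.infinite_range_of_injective (Nat.cast_injective (R := ℂ)))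
        rintro _ ⟨m, rfl⟩
        exact hnat m
      intro α
      rw [hp, this, Polynomial.eval_zero]
  have : D α = 0 := by
    ext n
    simpa using key _ n rfl α
  exact sub_eq_zero.mp this

lemma s5A_mul {k : ℕ} (ε : Fin (k+1) → ℂ) (α β : ℂ) (n) :
    ∑ ij ∈ Finset.HasAntidiagonal.antidiagonal n, s5A ε α ij.1 * s5A ε β ij.2 = s5A ε (α + β) n := by
  rw [← s5E_coeff, ← s5E_mul, MvPowerSeries.coeff_mul]
  rfl

lemma s5_summable (d : ℕ) :
    Summable (fun n : Fin d →₀ ℕ => ∏ a, ((1:ℝ)/2) ^ n a) := by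
  refine summable_of_sum_le (c := ∏ _a : Fin d, (2:ℝ)) (fun n => by positivity) fun u => ?_
  set M := ∑ n ∈ u, ∑ a, n a with hM
  have hinj : Set.InjOn (fun n : Fin d →₀ ℕ => (n : Fin d → ℕ)) u :=
    fun x _ y _ h => DFunLike.coe_injective h
  calc ∑ n ∈ u, ∏ a, ((1:ℝ)/2) ^ n a
      = ∑ n ∈ u.image (fun n : Fin d →₀ ℕ => (n : Fin d → ℕ)), ∏ a, ((1:ℝ)/2) ^ n a := by
        rw [Finset.sum_image hinj]
    _ ≤ ∑ n ∈ Fintype.piFinset (fun _ : Fin d => Finset.range (M+1)), ∏ a, ((1:ℝ)/2) ^ n a := by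
        refine Finset.sum_le_sum_of_subset_of_nonneg ?_ fun _ _ _ => by positivity
        intro n hn
        obtain ⟨m, hm, rfl⟩ := Finset.mem_image.mp hn
        rw [Fintype.mem_piFinset]
        intro a
        rw [Finset.mem_range, Nat.lt_succ_iff]
        exact (Finset.single_le_sum (f := fun a => m a) (fun _ _ => Nat.zero_le _)
          (Finset.mem_univ a)).trans
          (Finset.single_le_sum (f := fun n : Fin d →₀ ℕ => ∑ a, n a)
            (fun _ _ => Nat.zero_le _) hm)
    _ = ∏ _a : Fin d, ∑ j ∈ Finset.range (M+1), ((1:ℝ)/2)^j := by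
        rw [Finset.prod_univ_sum]
    _ ≤ ∏ _a : Fin d, (2:ℝ) := by
        refine Finset.prod_le_prod (fun _ _ => by positivity) fun _ _ => ?_
        exact (summable_geometric_two.sum_le_tsum _ (fun _ _ => by positivity)).trans
          tsum_geometric_two.le

lemma s5_desc_bound (z : ℂ) (B : ℝ) (m : ℕ) (h : ‖z‖ + m ≤ B) :
    ‖(descPochhammer ℂ m).eval z‖ ≤ B ^ m := by
  induction m with
  | zero => simp
  | succ m ih =>
    have hB : 0 ≤ B := le_trans (by positivity) h
    push_cast at h
    rw [descPochhammer_succ_eval, norm_mul, pow_succ]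
    refine mul_le_mul (ih (by linarith)) ?_ (norm_nonneg _) (by positivity)
    refine (norm_sub_le _ _).trans ?_
    simp only [Complex.norm_natCast]
    linarith

lemma s5_core {k : ℕ} (ε : Fin (k+1) → ℂ) (R C r : ℝ) (hR : 0 ≤ R)
    (hC : C = (∑ a, ‖ε a‖) + R + 2) (hr : r = (1/2) / (C * Real.exp (k+1)))
    (α : ℂ) (hα : ‖α‖ ≤ R) (n : Fin (k+1) →₀ ℕ) (hn : n ≠ 0) (x : Fin (k+1) → ℂ)
    (hx : ∀ a, ‖x a‖ ≤ r) :
    ‖(descPochhammer ℂ ((∑ a, n a) - 1)).eval ((∑ a, ε a * (n a : ℂ)) + α - 1) /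
      (∏ a, ((n a).factorial : ℂ)) * ∏ a, x a ^ n a‖ ≤ ∏ a, ((1:ℝ)/2) ^ n a := by
  have hpos := s5_sum_pos n hn
  set N := ∑ a, n a with hN
  have hN1 : (1:ℝ) ≤ N := by exact_mod_cast hpos
  have hK : 0 ≤ ∑ a, ‖ε a‖ := Finset.sum_nonneg fun _ _ => norm_nonneg _
  have hC1 : 1 ≤ C := by linarith
  have hCN : 1 ≤ C * N := by nlinarith
  have hs : ‖∑ a, ε a * (n a : ℂ)‖ ≤ (∑ a, ‖ε a‖) * N := by
    rw [Finset.sum_mul]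
    refine (norm_sum_le _ _).trans (Finset.sum_le_sum fun a _ => ?_)
    rw [norm_mul, Complex.norm_natCast]
    refine mul_le_mul_of_nonneg_left ?_ (norm_nonneg _)
    exact_mod_cast Finset.single_le_sum (f := fun a => n a) (fun _ _ => Nat.zero_le _)
          (Finset.mem_univ a)
  have hd : ‖(descPochhammer ℂ (N - 1)).eval ((∑ a, ε a * (n a : ℂ)) + α - 1)‖ ≤ (C * N) ^ N := by
    refine (s5_desc_bound _ (C * N) _ ?_).trans (pow_le_pow_right₀ hCN (by omega))
    have h1 : ‖(∑ a, ε a * (n a : ℂ)) + α - 1‖ ≤ (∑ a, ‖ε a‖) * N + R + 1 := by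
      refine (norm_sub_le _ _).trans ?_
      have := norm_add_le (∑ a, ε a * (n a : ℂ)) α
      simp only [norm_one]
      linarith
    have h2 : ((N - 1 : ℕ) : ℝ) = N - 1 := by push_cast [hpos]; ring
    rw [h2, hC]
    nlinarith
  have hr0 : 0 ≤ r := by rw [hr]; positivity
  rw [norm_mul, norm_div, norm_prod, norm_prod]
  simp only [Complex.norm_natCast, norm_pow]
  have hx' : ∏ a, ‖x a‖ ^ n a ≤ ∏ a, r ^ n a :=
    Finset.prod_le_prod (fun _ _ => by positivity) fun a _ =>
      pow_le_pow_left₀ (norm_nonneg _) (hx a) _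
  calc _ ≤ (C * N) ^ N / (∏ a, ((n a).factorial : ℝ)) * ∏ a, r ^ n a := by gcongr
    _ = (∏ a, (C * r) ^ n a) * ∏ a, ((N:ℝ) ^ n a / ((n a).factorial : ℝ)) := by
        rw [Finset.prod_div_distrib]
        simp only [Finset.prod_pow_eq_pow_sum, ← hN]
        rw [mul_pow, mul_pow]; ring
    _ ≤ (∏ a, (C * r) ^ n a) * ∏ _a : Fin (k+1), Real.exp N := by
        have : 0 ≤ C := by linarith
        gcongr with a
        exact Real.pow_div_factorial_le_exp _ (by positivity) _
    _ = ∏ a, ((1:ℝ)/2) ^ n a := by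
        have hC0 : C ≠ 0 := by linarith
        simp only [Finset.prod_pow_eq_pow_sum, ← hN, Finset.prod_const, Finset.card_univ,
          Fintype.card_fin]
        rw [← Real.exp_nat_mul]
        have : ((k+1:ℕ):ℝ) * (N:ℝ) = N * ((k:ℝ)+1) := by push_cast; ring
        rw [this, Real.exp_nat_mul, ← mul_pow, hr]
        congr 1
        field_simp

lemma s5_bound {k : ℕ} (ε : Fin (k+1) → ℂ) (R : ℝ) (hR : 0 ≤ R) :
    ∃ r > 0, ∃ u : (Fin (k+1) →₀ ℕ) → ℝ, Summable u ∧ ∀ x : Fin (k+1) → ℂ,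
      (∀ a, ‖x a‖ ≤ r) → ∀ n, (∀ α : ℂ, ‖α‖ ≤ R → ‖s5A ε α n * ∏ a, x a ^ n a‖ ≤ u n) ∧
        ‖s5c ε n * ∏ a, x a ^ n a‖ ≤ u n := by
  set C : ℝ := (∑ a, ‖ε a‖) + R + 2 with hC
  have hK : 0 ≤ ∑ a, ‖ε a‖ := Finset.sum_nonneg fun _ _ => norm_nonneg _
  have hC0 : 0 < C := by linarith
  refine ⟨(1/2) / (C * Real.exp (k+1)), by positivity,
    fun n => (R + 1) * ∏ a, ((1:ℝ)/2) ^ n a, (s5_summable (k+1)).mul_left _, ?_⟩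
  intro x hx n
  have hp : 0 ≤ ∏ a, ((1:ℝ)/2) ^ n a := by positivity
  by_cases hn : n = 0
  · subst hn
    simp [s5A, s5c]
    constructor
    · intro _ _; exact hR
    · linarith
  constructor
  · intro α hα
    have := s5_core ε R C _ hR hC rfl α hα n hn x hx
    rw [s5A, if_neg hn, mul_div_assoc, mul_assoc, norm_mul]
    refine mul_le_mul (by linarith) this (norm_nonneg _) (by linarith)
  · have := s5_core ε R C _ hR hC rfl 0 (by simpa using hR) n hn x hx
    rw [add_zero] at this
    rw [s5c, if_neg hn]
    nlinarith

lemma s5A_diff {k : ℕ} (ε : Fin (k+1) → ℂ) (n : Fin (k+1) →₀ ℕ) :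
    Differentiable ℂ (fun α => s5A ε α n) := by
  obtain ⟨p, hp⟩ := s5A_poly ε n
  simp only [hp]
  exact p.differentiable

lemma s5A_deriv {k : ℕ} (ε : Fin (k+1) → ℂ) (n : Fin (k+1) →₀ ℕ) :
    HasDerivAt (fun α => s5A ε α n) (s5c ε n) 0 := by
  by_cases hn : n = 0
  · simp only [s5A, s5c, hn, if_true]
    exact hasDerivAt_const _ _
  · simp only [s5A, s5c, if_neg hn]
    have hg : DifferentiableAt ℂ (fun α : ℂ => (descPochhammer ℂ ((∑ a, n a) - 1)).eval
        ((∑ a, ε a * (n a : ℂ)) + α - 1)) 0 := by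
      apply DifferentiableAt.comp (g := fun z => (descPochhammer ℂ ((∑ a, n a) - 1)).eval z)
      · exact (Polynomial.differentiable _).differentiableAt
      · fun_prop
    have := ((hasDerivAt_id (0:ℂ)).mul hg.hasDerivAt).div_const (∏ a, ((n a).factorial : ℂ))
    refine this.congr_deriv ?_
    simp

lemma s5_shift {k : ℕ} (f : (Fin (k+1) →₀ ℕ) → ℂ) (x : Fin (k+1) → ℂ) (a : Fin (k+1)) (S : ℂ)
    (h : HasSum (fun n => f n * ∏ b, x b ^ n b) S) :
    HasSum (fun n : Fin (k+1) →₀ ℕ => (if Finsupp.single a 1 ≤ n then f (n - Finsupp.single a 1)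
      else 0) * ∏ b, x b ^ n b) (x a * S) := by
  have hinj : Function.Injective (fun m : Fin (k+1) →₀ ℕ => m + Finsupp.single a 1) :=
    add_left_injective _
  rw [← hinj.hasSum_iff]
  · have h2 := h.mul_left (x a)
    refine Eq.mp (congrArg (fun g => HasSum g (x a * S)) (funext fun n => ?_)) h2
    have h1 : ∏ b, x b ^ (Finsupp.single a 1 b) = x a := by
      rw [Finset.prod_eq_single a]
      · simp
      · intro b _ hb
        simp [hb.symm]
      · simp
    simp only [Function.comp_apply, Finsupp.add_apply, pow_add, Finset.prod_mul_distrib, h1,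
      add_tsub_cancel_right]
    rw [if_pos (by simp)]
    ring
  · intro n hn
    rw [if_neg, zero_mul]
    intro hle
    exact hn ⟨n - Finsupp.single a 1, tsub_add_cancel_of_le hle⟩

lemma s5_tsum_mul {k : ℕ} (ε : Fin (k+1) → ℂ) (x : Fin (k+1) → ℂ) (α β : ℂ)
    (hα : Summable fun n => ‖s5A ε α n * ∏ a, x a ^ n a‖)
    (hβ : Summable fun n => ‖s5A ε β n * ∏ a, x a ^ n a‖) :
    ∑' n, s5A ε (α + β) n * ∏ a, x a ^ n a =
      (∑' n, s5A ε α n * ∏ a, x a ^ n a) * ∑' n, s5A ε β n * ∏ a, x a ^ n a := by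
  have hp : Summable (fun z : (Fin (k+1) →₀ ℕ) × (Fin (k+1) →₀ ℕ) =>
      (fun n => s5A ε α n * ∏ a, x a ^ n a) z.1 * (fun n => s5A ε β n * ∏ a, x a ^ n a) z.2) :=
    summable_mul_of_summable_norm (f := fun n => s5A ε α n * ∏ a, x a ^ n a)
      (g := fun n => s5A ε β n * ∏ a, x a ^ n a) hα hβ
  have h := Summable.tsum_mul_tsum_eq_tsum_sum_antidiagonal
    (f := fun n => s5A ε α n * ∏ a, x a ^ n a) (g := fun n => s5A ε β n * ∏ a, x a ^ n a)
    hα.of_norm hβ.of_norm hp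
  refine Eq.trans (tsum_congr fun n => ?_) h.symm
  rw [← s5A_mul, Finset.sum_mul]
  refine Finset.sum_congr rfl fun ij hij => ?_
  have hij' := Finset.HasAntidiagonal.mem_antidiagonal.mp hij
  rw [← hij']
  simp only [Finsupp.add_apply, pow_add, Finset.prod_mul_distrib]
  ring

lemma s5_main {k : ℕ} (ε : Fin (k+1) → ℂ) :
    ∃ r > 0, ∃ F : (Fin (k+1) → ℂ) → ℂ, (∀ x, (∀ a, ‖x a‖ ≤ r) →
      HasSum (fun n => s5c ε n * ∏ a, x a ^ n a) (F x) ∧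
      Complex.exp (F x) = 1 + ∑ a, x a * Complex.exp (ε a * F x)) ∧
      ContinuousAt F 0 ∧ F 0 = 0 := by
  set R : ℝ := (∑ a, ‖ε a‖) + 2 with hRdef
  have hK : 0 ≤ ∑ a, ‖ε a‖ := Finset.sum_nonneg fun _ _ => norm_nonneg _
  obtain ⟨r, hr, u, hu, hb⟩ := s5_bound ε R (by linarith)
  refine ⟨r, hr, fun x => ∑' n, s5c ε n * ∏ a, x a ^ n a, ?_, ?_, ?_⟩
  · intro x hx
    have hsum : HasSum (fun n => s5c ε n * ∏ a, x a ^ n a) (∑' n, s5c ε n * ∏ a, x a ^ n a) :=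
      (Summable.of_norm_bounded hu fun n => (hb x hx n).2).hasSum
    refine ⟨hsum, ?_⟩
    set F := ∑' n, s5c ε n * ∏ a, x a ^ n a with hF
    set E : ℂ → ℂ := fun α => ∑' n, s5A ε α n * ∏ a, x a ^ n a with hE
    have hnormS : ∀ α, ‖α‖ ≤ R → Summable fun n => ‖s5A ε α n * ∏ a, x a ^ n a‖ := fun α hα =>
      Summable.of_nonneg_of_le (fun _ => norm_nonneg _) (fun n => (hb x hx n).1 α hα) hu
    have hES : ∀ α, ‖α‖ ≤ R → HasSum (fun n => s5A ε α n * ∏ a, x a ^ n a) (E α) := fun α hα =>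
      (hnormS α hα).of_norm.hasSum
    have hE0 : E 0 = 1 := by
      simp only [hE]
      rw [tsum_eq_single 0]
      · simp [s5A]
      · intro n hn; simp [s5A, hn]
    have hmul : ∀ α β, ‖α‖ ≤ R → ‖β‖ ≤ R → E (α + β) = E α * E β := by
      intro α β hα hβ
      exact s5_tsum_mul ε x α β (hnormS α hα) (hnormS β hβ)
    have hR0 : (0:ℂ) ∈ Metric.ball (0:ℂ) R := by simp; linarith
    have hfd : ∀ n, DifferentiableOn ℂ (fun α => s5A ε α n * ∏ a, x a ^ n a)
        (Metric.ball 0 R) := fun n => ((s5A_diff ε n).mul_const _).differentiableOn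
    have hfb : ∀ n, ∀ α ∈ Metric.ball (0:ℂ) R, ‖s5A ε α n * ∏ a, x a ^ n a‖ ≤ u n :=
      fun n α hα => (hb x hx n).1 α (le_of_lt (by simpa using hα))
    have hEd : DifferentiableOn ℂ E (Metric.ball 0 R) :=
      Complex.differentiableOn_tsum_of_summable_norm hu hfd Metric.isOpen_ball hfb
    have hderiv0 : HasDerivAt E F 0 := by
      have h1 := Complex.hasSum_deriv_of_summable_norm hu hfd Metric.isOpen_ball hfb hR0
      have h2 : ∀ n, deriv (fun α => s5A ε α n * ∏ a, x a ^ n a) 0 = s5c ε n * ∏ a, x a ^ n a :=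
        fun n => ((s5A_deriv ε n).mul_const _).deriv
      simp only [h2] at h1
      have h3 := h1.unique hsum
      have := (hEd.differentiableAt (Metric.isOpen_ball.mem_nhds hR0)).hasDerivAt
      rwa [show deriv E 0 = F from h3] at this
    have hderiv : ∀ α ∈ Metric.ball (0:ℂ) R, HasDerivAt E (E α * F) α := by
      intro α hα
      have hα' : ‖α‖ ≤ R := le_of_lt (by simpa using hα)
      have h1 : HasDerivAt (fun z => E α * E (z - α)) (E α * F) α := by
        refine HasDerivAt.const_mul _ ?_
        have : HasDerivAt E F (α - α) := by simpa using hderiv0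
        exact HasDerivAt.comp_sub_const α α this
      refine h1.congr_of_eventuallyEq ?_
      have hcont : ContinuousAt (fun z : ℂ => z - α) α := by fun_prop
      have : ∀ᶠ z in nhds α, z - α ∈ Metric.ball (0:ℂ) R :=
        hcont.eventually_mem (Metric.isOpen_ball.mem_nhds (by simpa using hR0))
      filter_upwards [this] with z hz
      rw [← hmul α _ hα' (le_of_lt (by simpa using hz))]
      congr 1; ring
    have hexp : ∀ α ∈ Metric.ball (0:ℂ) R, E α = Complex.exp (α * F) := by
      intro α hα
      have hd : ∀ z ∈ Metric.ball (0:ℂ) R,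
          HasDerivAt (fun z => E z * Complex.exp (-(z * F))) 0 z := by
        intro z hz
        have h1 : HasDerivAt (fun z : ℂ => Complex.exp (-(z * F)))
            (Complex.exp (-(z * F)) * (-(1 * F))) z :=
          (((hasDerivAt_id z).mul_const F).neg).cexp
        refine ((hderiv z hz).mul h1).congr_deriv ?_
        ring
      have := Metric.isOpen_ball.is_const_of_deriv_eq_zero
        (convex_ball (0:ℂ) R).isPreconnected
        (fun z hz => (hd z hz).differentiableAt.differentiableWithinAt)
        (fun z hz => (hd z hz).deriv) hα hR0
      simp only [hE0, zero_mul, neg_zero, Complex.exp_zero, mul_one] at this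
      rw [Complex.exp_neg] at this
      field_simp at this
      exact this
    have hball : ∀ a, ε a ∈ Metric.ball (0:ℂ) R := by
      intro a
      have := Finset.single_le_sum (f := fun a => ‖ε a‖) (fun _ _ => norm_nonneg _)
        (Finset.mem_univ a)
      simp only [mem_ball_zero_iff]
      linarith
    have h1ball : (1:ℂ) ∈ Metric.ball (0:ℂ) R := by
      simp only [mem_ball_zero_iff, norm_one]; linarith
    have hrec : E 1 = E 0 + ∑ a, x a * E (ε a) := by
      have h1 := hES 1 (le_of_lt (by simpa using h1ball))
      have h0 := hES 0 (le_of_lt (by simpa using hR0))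
      have h2 := h0.add (hasSum_sum (s := Finset.univ) fun a _ => s5_shift _ x a _
        (hES (ε a) (le_of_lt (by simpa using hball a))))
      refine h1.unique ?_
      convert h2 using 1
      funext n
      have h3 := s5_rec ε 0 n
      simp only [zero_add] at h3
      rw [h3, add_mul, Finset.sum_mul]
    rw [hE0, hexp 1 h1ball, one_mul] at hrec
    rw [hrec]
    congr 1
    exact Finset.sum_congr rfl fun a _ => by rw [hexp _ (hball a)]
  · have hc : ContinuousOn (fun x : Fin (k+1) → ℂ => ∑' n, s5c ε n * ∏ a, x a ^ n a)
        (Metric.closedBall 0 r) := by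
      refine continuousOn_tsum (fun n => ?_) hu fun n x hx => (hb x ?_ n).2
      · fun_prop
      · intro a
        exact (norm_le_pi_norm x a).trans (by simpa using hx)
    exact hc.continuousAt (Metric.closedBall_mem_nhds _ hr)
  · simp only
    rw [tsum_eq_single 0]
    · simp [s5c]
    · intro n hn
      obtain ⟨a, ha⟩ : ∃ a, n a ≠ 0 := by
        by_contra hc
        push Not at hc
        exact hn (Finsupp.ext hc)
      rw [Finset.prod_eq_zero (Finset.mem_univ a), mul_zero]
      simp [ha]

/-- let `y` be the holomorphic function on a neighborhood `V` of `0` in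
`ℂ^{k+1}` with `y(0) = −1` solving the mirror curve equation
`1 + y(q̃) + ∑ₐ q̃ₐ exp(εₐ(πi + Log(−y(q̃)))) = 0`. Then, near `0`, one has the absolutely
convergent expansion of `Log(−y(q̃))` as the sum over nonzero multi-indices
`(n₀, …, n_k)` of `(ε₀n₀ + ⋯ + ε_k n_k − 1)_(n₀+⋯+n_k−1) / (n₀! ⋯ n_k!) ·
∏ₐ (e^{πiεₐ} q̃ₐ)^{nₐ}`, where `(a)_m` is the falling factorial. -/
theorem statement5 (k : ℕ) (ε : Fin (k + 1) → ℚ)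
    (V : Set (Fin (k + 1) → ℂ)) (hV : IsOpen V) (h0V : (0 : Fin (k + 1) → ℂ) ∈ V)
    (y : (Fin (k + 1) → ℂ) → ℂ) (hy : DifferentiableOn ℂ y V) (hy0 : y 0 = -1)
    (heq : ∀ q ∈ V, 1 + y q + ∑ a : Fin (k + 1),
        q a * Complex.exp ((ε a : ℂ) * ((Real.pi : ℂ) * Complex.I
          + Complex.log (-(y q)))) = 0) :
    ∀ᶠ q in nhds (0 : Fin (k + 1) → ℂ), HasSum
      (fun n : Fin (k + 1) →₀ ℕ =>
        (if n = 0 then (0 : ℂ)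
          else (descPochhammer ℂ ((∑ a : Fin (k + 1), n a) - 1)).eval
                ((∑ a : Fin (k + 1), (ε a : ℂ) * (n a : ℂ)) - 1) /
              ∏ a : Fin (k + 1), ((n a).factorial : ℂ))
          * ∏ a : Fin (k + 1),
              (Complex.exp ((Real.pi : ℂ) * Complex.I * (ε a : ℂ)) * q a) ^ n a)
      (Complex.log (-(y q))) := by
  obtain ⟨r, hr, F, hF, hFc, hF0⟩ := s5_main (fun a => (ε a : ℂ))
  set x : (Fin (k + 1) → ℂ) → (Fin (k + 1) → ℂ) := fun q a =>
    Complex.exp ((Real.pi : ℂ) * Complex.I * (ε a : ℂ)) * q a with hx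
  set L : (Fin (k + 1) → ℂ) → ℂ := fun q => Complex.log (-(y q)) with hL
  have hxc : Continuous x := by fun_prop
  have hx0 : x 0 = 0 := by ext a; simp [hx]
  have hyc : ContinuousAt y 0 := (hy.differentiableAt (hV.mem_nhds h0V)).continuousAt
  have hLc : ContinuousAt L 0 := by
    refine ContinuousAt.clog hyc.neg ?_
    rw [hy0]; simp
  have hL0 : L 0 = 0 := by simp [hL, hy0]
  have hxT : Filter.Tendsto x (nhds 0) (nhds 0) := by
    have := hxc.tendsto 0; rwa [hx0] at this
  have hGT : Filter.Tendsto (fun q => F (x q)) (nhds 0) (nhds 0) := by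
    have := hFc.tendsto; rw [hF0] at this
    exact this.comp hxT
  have hLT : Filter.Tendsto L (nhds 0) (nhds 0) := by
    have := hLc.tendsto; rwa [hL0] at this
  have hpair : Filter.Tendsto (fun q => (L q, F (x q))) (nhds 0) (nhds ((0:ℂ), (0:ℂ))) :=
    hLT.prodMk_nhds hGT
  have hxs : ∀ᶠ q in nhds (0 : Fin (k + 1) → ℂ), ∀ a, ‖x q a‖ ≤ r := by
    filter_upwards [hxT.eventually (Metric.closedBall_mem_nhds _ hr)] with q hq a
    exact (norm_le_pi_norm _ a).trans (by simpa using hq)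
  have hlow : ∀ᶠ q in nhds (0 : Fin (k + 1) → ℂ), ‖Complex.exp (L q) - Complex.exp (F (x q))
      - (L q - F (x q))‖ ≤ (1/4) * ‖L q - F (x q)‖ := by
    have h1 : HasStrictDerivAt Complex.exp (Complex.exp 0) 0 := Complex.hasStrictDerivAt_exp 0
    have h2 := h1.hasStrictFDerivAt.isLittleO.def (c := 1/4) (by norm_num)
    filter_upwards [hpair.eventually h2] with q hq
    simpa using hq
  have hup : ∀ a, ∀ᶠ q in nhds (0 : Fin (k + 1) → ℂ),
      ‖Complex.exp ((ε a : ℂ) * L q) - Complex.exp ((ε a : ℂ) * F (x q))‖ ≤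
        (‖(ε a : ℂ)‖ + 1) * ‖L q - F (x q)‖ := by
    intro a
    have h0 : HasStrictDerivAt (fun w : ℂ => (ε a : ℂ) * w) ((ε a : ℂ)) 0 := by
      simpa using (hasStrictDerivAt_id (0:ℂ)).const_mul (ε a : ℂ)
    have h1 : HasStrictDerivAt (fun w : ℂ => Complex.exp ((ε a : ℂ) * w)) (ε a : ℂ) 0 := by
      simpa using h0.cexp
    have h2 := h1.hasStrictFDerivAt.isLittleO.def (c := 1) (by norm_num)
    filter_upwards [hpair.eventually h2] with q hq
    simp only [ContinuousLinearMap.toSpanSingleton_apply, smul_eq_mul, one_mul] at hq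
    have h3 := norm_add_le (Complex.exp ((ε a : ℂ) * L q) - Complex.exp ((ε a : ℂ) * F (x q))
      - (L q - F (x q)) * (ε a : ℂ)) ((L q - F (x q)) * (ε a : ℂ))
    rw [sub_add_cancel, norm_mul (L q - F (x q))] at h3
    linarith
  have hsmall : ∀ᶠ q in nhds (0 : Fin (k + 1) → ℂ),
      ∑ a, ‖x q a‖ * (‖(ε a : ℂ)‖ + 1) < 1/4 := by
    have hc : Continuous fun q => ∑ a, ‖x q a‖ * (‖(ε a : ℂ)‖ + 1) := by fun_prop
    have h1 := hc.tendsto 0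
    have h2 : ∑ a, ‖x 0 a‖ * (‖(ε a : ℂ)‖ + 1) = 0 := by simp [hx0]
    rw [h2] at h1
    exact h1.eventually (gt_mem_nhds (by norm_num))
  have hyne : ∀ᶠ q in nhds (0 : Fin (k + 1) → ℂ), y q ≠ 0 :=
    hyc.eventually_ne (by rw [hy0]; simp)
  filter_upwards [hxs, hlow, Filter.eventually_all.mpr hup, hsmall, hyne, hV.mem_nhds h0V]
    with q hq1 hq2 hq3 hq4 hq5 hq6
  obtain ⟨hsum, hFe⟩ := hF (x q) hq1
  have hLe : Complex.exp (L q) = 1 + ∑ a, x q a * Complex.exp ((ε a : ℂ) * L q) := by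
    have h1 := heq q hq6
    have h2 : Complex.exp (L q) = - y q := Complex.exp_log (neg_ne_zero.mpr hq5)
    have h3 : ∑ a, x q a * Complex.exp ((ε a : ℂ) * L q) = ∑ a : Fin (k + 1),
        q a * Complex.exp ((ε a : ℂ) * ((Real.pi : ℂ) * Complex.I
          + Complex.log (-(y q)))) := by
      refine Finset.sum_congr rfl fun a _ => ?_
      rw [mul_add, Complex.exp_add, mul_comm (ε a : ℂ) ((Real.pi : ℂ) * Complex.I)]
      simp only [hx, hL]
      ring
    rw [h2, h3]
    linear_combination -h1
  have hdiff : ‖Complex.exp (L q) - Complex.exp (F (x q))‖ ≤ 1/4 * ‖L q - F (x q)‖ := by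
    have h1 : Complex.exp (L q) - Complex.exp (F (x q)) = ∑ a, x q a *
        (Complex.exp ((ε a : ℂ) * L q) - Complex.exp ((ε a : ℂ) * F (x q))) := by
      rw [hLe, hFe]
      simp only [mul_sub, Finset.sum_sub_distrib]
      ring
    rw [h1]
    refine (norm_sum_le _ _).trans ?_
    calc _ ≤ ∑ a, ‖x q a‖ * (‖(ε a : ℂ)‖ + 1) * ‖L q - F (x q)‖ := by
          refine Finset.sum_le_sum fun a _ => ?_
          rw [norm_mul, mul_assoc]
          exact mul_le_mul_of_nonneg_left (hq3 a) (norm_nonneg _)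
      _ ≤ _ := by
          rw [← Finset.sum_mul]
          exact mul_le_mul_of_nonneg_right hq4.le (norm_nonneg _)
  have hzero : L q = F (x q) := by
    have h1 := norm_sub_le (Complex.exp (L q) - Complex.exp (F (x q)))
      (Complex.exp (L q) - Complex.exp (F (x q)) - (L q - F (x q)))
    rw [sub_sub_cancel] at h1
    have h2 : ‖L q - F (x q)‖ ≤ 0 := by linarith [norm_nonneg (L q - F (x q))]
    exact sub_eq_zero.mp (norm_le_zero_iff.mp h2)
  have : HasSum (fun n => s5c (fun a => (ε a : ℂ)) n * ∏ a, x q a ^ n a) (L q) := by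
    rw [hzero]; exact hsum
  exact this
end

section
/- Let s_1, d_0 be positive integers, set q := d_0/s_1 and ε_1 := {q} (the fractional part of q), let f be an integer, and let ε_2, ε_3 be rational numbers with ε_1 + ε_2 + ε_3 ∈ ℤ. Then, writing (−1)^t := e^{πi t} for rational t, one has (−1)^{⌈f q − ε_2⌉ + ⌊q⌋ + ε_1 + ε_2 + ε_3 − 1} = −(−1)^{q(−f−1) − ε_3 − {ε_2 − f ε_1}}. -/
/-- the sign identity converting the localization sign of the disk factor
into the framed-brane sign.  Here `q = d₀/s₁`, `ε₁ = {q}` is the fractional part of `q`,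
`ε₂, ε₃ ∈ ℚ` satisfy `ε₁ + ε₂ + ε₃ ∈ ℤ`, and for rational `t` one writes
`(−1)^t := e^{πit}`.  The claim is
`(−1)^{⌈fq − ε₂⌉ + ⌊q⌋ + ε₁ + ε₂ + ε₃ − 1} = −(−1)^{q(−f−1) − ε₃ − {ε₂ − fε₁}}`. -/
theorem statement9 (s1 d0 : ℕ) (hs1 : 0 < s1) (hd0 : 0 < d0) (f : ℤ) (ε2 ε3 : ℚ)
    (h : ∃ m : ℤ, Int.fract ((d0 : ℚ) / (s1 : ℚ)) + ε2 + ε3 = (m : ℚ)) :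
    Complex.exp ((Real.pi : ℂ) * Complex.I *
        (((⌈(f : ℚ) * ((d0 : ℚ) / (s1 : ℚ)) - ε2⌉ : ℤ) + ((⌊(d0 : ℚ) / (s1 : ℚ)⌋ : ℤ) : ℚ)
          + Int.fract ((d0 : ℚ) / (s1 : ℚ)) + ε2 + ε3 - 1 : ℚ) : ℂ)) =
      -Complex.exp ((Real.pi : ℂ) * Complex.I *
        ((((d0 : ℚ) / (s1 : ℚ)) * (-(f : ℚ) - 1) - ε3
          - Int.fract (ε2 - (f : ℚ) * Int.fract ((d0 : ℚ) / (s1 : ℚ))) : ℚ) : ℂ)) := by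
  obtain ⟨m, hm⟩ := h
  generalize (d0 : ℚ) / (s1 : ℚ) = q at *
  have hq : q = ⌊q⌋ + Int.fract q := (Int.floor_add_fract q).symm
  generalize ⌊q⌋ = n at *
  generalize Int.fract q = e at *
  have hk := Int.floor_add_fract (ε2 - (f : ℚ) * e)
  have hc : ⌈(f : ℚ) * q - ε2⌉ = f * n - ⌊ε2 - (f : ℚ) * e⌋ := by
    have : (f : ℚ) * q - ε2 = -(ε2 - (f : ℚ) * e) + ((f * n : ℤ) : ℚ) := by
      rw [hq]; push_cast; ring
    rw [this, Int.ceil_add_intCast, Int.ceil_neg]; ring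
  rw [hc]
  generalize ⌊ε2 - (f : ℚ) * e⌋ = k at *
  generalize Int.fract (ε2 - (f : ℚ) * e) = r at *
  have hL : ((f * n - k : ℤ) : ℚ) + (n : ℚ) + e + ε2 + ε3 - 1
      = ((f * n - k + n + m - 1 : ℤ) : ℚ) := by
    push_cast; linarith
  have hR : q * (-(f : ℚ) - 1) - ε3 - r = ((-(f * n - k + n + m - 1) - 1 : ℤ) : ℚ) := by
    rw [hq]; push_cast; linarith
  rw [hL, hR]
  generalize f * n - k + n + m - 1 = L
  have h1 : (Real.pi : ℂ) * Complex.I * (((L : ℤ) : ℚ) : ℂ)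
      = (Real.pi : ℂ) * Complex.I * (((-L - 1 : ℤ) : ℚ) : ℂ)
        + (Real.pi * Complex.I + L * (2 * Real.pi * Complex.I)) := by
    push_cast; ring
  rw [h1, Complex.exp_add, Complex.exp_add, Complex.exp_int_mul_two_pi_mul_I, Complex.exp_pi_mul_I]
  ring
end

section
/- For a, b ∈ ℂ with a − b ∈ ℤ define the bracket symbol [a; b] as follows: if n := a − b ≥ 0 then [a; b] := Π_{j=0}^{n−1}(a − j), and if n < 0 then [a; b] := 1 / Π_{j=0}^{−n−1}(b − j), provided all factors b − j are nonzero. Let s_1, d_0 be positive integers, f an integer, ε_1 := {d_0/s_1}, and let ε_2, ε_3 ∈ ℚ ∩ [0,1) satisfy age := ε_1 + ε_2 + ε_3 ∈ ℤ. Let ℓ_1, ℓ_2, ℓ_3 be rational numbers with ℓ_j + ε_j ∈ ℤ for j = 1, 2, 3, and suppose L_1 := d_0/s_1 + ℓ_1 is a nonnegative integer; set L_2 := f d_0/s_1 + ℓ_2 and L_3 := −(f+1)d_0/s_1 + ℓ_3. Let z be a nonzero complex number, write (−1)^t := e^{πi t} for rational t, and define D' := −(−1)^{(d_0/s_1)(−f−1)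 − ε_3 − {ε_2 − f ε_1}} · (s_1/d_0) · z^{age} · [ Π_{a=1}^{⌊d_0/s_1⌋ + age − 1} ( f d_0/s_1 − ε_2 + a ) ] / ⌊d_0/s_1⌋! and I := z^{−age} · [d_0/s_1 − ε_1; L_1] · [f d_0/s_1 − ε_2; L_2] · [−(f+1)d_0/s_1 − ε_3; L_3]. Then, provided all bracket symbols appearing are defined (no denominator factor vanishes), D' · I = −(−1)^{(d_0/s_1)(−f−1) − {ε_2 − f ε_1} + ℓ_3} · (s_1/d_0) · [−L_3 − 1; L_2] · [0; L_1]. -/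
open scoped BigOperators Classical

/-- The regularized bracket symbol `[a; b]` for `a, b ∈ ℂ` with `a − b ∈ ℤ`: if
`n = a − b ≥ 0` it is `∏_{j=0}^{n−1} (a − j)`, and if `n < 0` it is
`1 / ∏_{j=0}^{−n−1} (b − j)` (junk value `0` if `a − b ∉ ℤ`). -/
noncomputable def bracket (a b : ℂ) : ℂ :=
  if h : ∃ n : ℤ, a - b = (n : ℂ) then
    if 0 ≤ h.choose then ∏ j ∈ Finset.range h.choose.toNat, (a - (j : ℂ))
    else (∏ j ∈ Finset.range (-h.choose).toNat, (b - (j : ℂ)))⁻¹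
  else 0

/-- `[a; b]` is defined: `a − b` is an integer `n`, and if `n < 0` no denominator factor
`b − j`, `0 ≤ j ≤ −n−1`, vanishes. -/
def BracketDefined (a b : ℂ) : Prop :=
  ∃ n : ℤ, a - b = (n : ℂ) ∧
    (0 ≤ n ∨ ∀ j ∈ Finset.range (-n).toNat, b - (j : ℂ) ≠ 0)

/-- `(−1)^t := e^{πit}` for rational `t`. -/
noncomputable def mphase (t : ℚ) : ℂ := Complex.exp ((Real.pi : ℂ) * Complex.I * (t : ℂ))

noncomputable def brAux (a : ℂ) (n : ℤ) : ℂ :=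
  if 0 ≤ n then ∏ j ∈ Finset.range n.toNat, (a - (j : ℂ))
  else (∏ j ∈ Finset.range (-n).toNat, (a + 1 + (j : ℂ)))⁻¹

lemma prod_up (a : ℂ) (m : ℕ) :
    ∏ j ∈ Finset.range m, (a + (m : ℂ) - (j : ℂ)) = ∏ j ∈ Finset.range m, (a + 1 + (j : ℂ)) := by
  rw [← Finset.prod_range_reflect]
  refine Finset.prod_congr rfl fun j hj => ?_
  have hj := Finset.mem_range.1 hj
  have : m - 1 - j + (1 + j) = m := by omega
  have h2 : (((m - 1 - j : ℕ) : ℂ)) + (1 + (j : ℂ)) = m := by exact_mod_cast this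
  linear_combination -h2

lemma bracket_eq (a b : ℂ) (n : ℤ) (h : a - b = n) : bracket a b = brAux a n := by
  have hex : ∃ n : ℤ, a - b = (n : ℂ) := ⟨n, h⟩
  have hc : hex.choose = n := by
    have := h.symm.trans hex.choose_spec
    exact_mod_cast this.symm
  unfold bracket brAux
  rw [dif_pos hex, hc]
  split_ifs with h0
  · rfl
  · congr 1
    rw [← prod_up]
    refine Finset.prod_congr rfl fun j _ => ?_
    have : (((-n).toNat : ℤ)) = -n := by omega
    have h2 : (((-n).toNat : ℂ)) = -(n : ℂ) := by exact_mod_cast congrArg (Int.cast : ℤ → ℂ) this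
    rw [h2]
    linear_combination -h

lemma brAux_nat (a : ℂ) (m : ℕ) : brAux a m = ∏ j ∈ Finset.range m, (a - (j : ℂ)) := by
  simp [brAux]

lemma brAux_neg (a : ℂ) (m : ℕ) :
    brAux a (-(m : ℤ)) = (∏ j ∈ Finset.range m, (a + 1 + (j : ℂ)))⁻¹ := by
  unfold brAux
  split_ifs with h
  · have : m = 0 := by omega
    subst this; simp
  · simp

lemma brAux_succ (a : ℂ) (n : ℤ) (h : 0 ≤ n ∨ a + 1 ≠ 0) :
    brAux (a + 1) (n + 1) = (a + 1) * brAux a n := by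
  by_cases h0 : 0 ≤ n
  · lift n to ℕ using h0
    have := brAux_nat (a + 1) (n + 1)
    push_cast at this
    rw [this, brAux_nat, Finset.prod_range_succ', mul_comm]
    congr 1
    · simp
    · refine Finset.prod_congr rfl fun j _ => ?_
      push_cast; ring
  · have ha : a + 1 ≠ 0 := h.resolve_left h0
    obtain ⟨m, hm⟩ : ∃ m : ℕ, n = -((m + 1 : ℕ) : ℤ) := ⟨(-n - 1).toNat, by omega⟩
    subst hm
    have e : -((m + 1 : ℕ) : ℤ) + 1 = -(m : ℤ) := by push_cast; ring
    rw [e, brAux_neg, brAux_neg, Finset.prod_range_succ', mul_inv]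
    simp only [Nat.cast_zero, add_zero]
    rw [mul_comm, mul_assoc, inv_mul_cancel₀ ha, mul_one]
    congr 1
    refine Finset.prod_congr rfl fun j _ => ?_
    push_cast; ring

/-- definedness -/
def dfAux (a : ℂ) (n : ℤ) : Prop := ∀ k : ℤ, 1 ≤ k → k ≤ -n → a + k ≠ 0

lemma cocycle_nat (b : ℂ) (m : ℤ) (h : dfAux b m) (p : ℕ) :
    brAux (b + p) p * brAux b m = brAux (b + p) (p + m) := by
  induction p with
  | zero => simp [brAux]
  | succ p ih =>
    have e1 := brAux_succ (b + p) p (Or.inl (by positivity))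
    have e2 := brAux_succ (b + p) (p + m) (by
      by_cases h0 : 0 ≤ (p : ℤ) + m
      · exact Or.inl h0
      · right
        have := h (p + 1) (by omega) (by omega)
        push_cast at this
        rwa [← add_assoc] at this)
    have c : b + ((p + 1 : ℕ) : ℂ) = b + p + 1 := by push_cast; ring
    have c2 : ((p + 1 : ℕ) : ℤ) + m = p + m + 1 := by push_cast; ring
    rw [c, c2, e2, ← ih, ← mul_assoc, ← e1]
    push_cast; rfl

lemma cocycle_neg (b : ℂ) (m : ℤ) (p : ℕ) (h : dfAux (b - p) (-p)) :
    brAux (b - p) (-p) * brAux b m = brAux (b - p) (-p + m) := by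
  induction p with
  | zero => simp [brAux]
  | succ p ih =>
    have ha : b - ((p + 1 : ℕ) : ℂ) + 1 ≠ 0 := by
      have := h 1 le_rfl (by push_cast; omega)
      simpa using this
    have e1 := brAux_succ (b - ((p + 1 : ℕ) : ℂ)) (-((p + 1 : ℕ) : ℤ)) (Or.inr ha)
    have e2 := brAux_succ (b - ((p + 1 : ℕ) : ℂ)) (-((p + 1 : ℕ) : ℤ) + m) (Or.inr ha)
    have c : b - ((p + 1 : ℕ) : ℂ) + 1 = b - p := by push_cast; ring
    have c2 : -((p + 1 : ℕ) : ℤ) + m + 1 = -p + m := by push_cast; ring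
    have c3 : -((p + 1 : ℕ) : ℤ) + 1 = -p := by push_cast; ring
    have ih' := ih (fun k h1 h2 => by
      have := h (k + 1) (by omega) (by push_cast; omega)
      intro h3
      apply this
      push_cast
      linear_combination h3)
    apply mul_left_cancel₀ ha
    rw [← mul_assoc, ← e1, ← e2, c, c2, c3, ih']

lemma cocycle (a b : ℂ) (n m : ℤ) (hab : a - b = n) (h1 : dfAux a n) (h2 : dfAux b m) :
    brAux a n * brAux b m = brAux a (n + m) := by
  rcases Int.eq_nat_or_neg n with ⟨p, rfl | rfl⟩
  · have : a = b + p := by push_cast at hab; linear_combination hab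
    subst this
    exact cocycle_nat b m h2 p
  · have : a = b - p := by push_cast at hab; linear_combination hab
    subst this
    exact cocycle_neg b m p h1

lemma dfAux_of (a b : ℂ) (n : ℤ) (h : a - b = n) (hB : BracketDefined a b) : dfAux a n := by
  obtain ⟨n', h', hn⟩ := hB
  have : n' = n := by rw [h] at h'; exact_mod_cast h'.symm
  subst this
  intro k h1 h2 h3
  rcases hn with hn | hn
  · omega
  · apply hn (-n' - k).toNat (by rw [Finset.mem_range]; omega)
    have : (((-n' - k).toNat : ℤ)) = -n' - k := by omega
    have e : (((-n' - k).toNat : ℂ)) = -(n' : ℂ) - k := by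
      exact_mod_cast congrArg (Int.cast : ℤ → ℂ) this
    rw [e]; linear_combination h3 - h

/-- reflection: `[y; y+m] = (-1)^m [-y-1-m; -y-1]`. -/
lemma reflect (y : ℂ) (m : ℤ) : brAux y (-m) = (-1) ^ m * brAux (-y - 1 - m) (-m) := by
  rcases Int.eq_nat_or_neg m with ⟨p, rfl | rfl⟩
  · rw [brAux_neg, brAux_neg, zpow_natCast, ← inv_inj, mul_inv, inv_inv, inv_inv, ← inv_pow,
      inv_neg_one, ← prod_up]
    have : (-1 : ℂ) ^ p = ∏ j ∈ Finset.range p, (-1 : ℂ) := by simp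
    rw [this, ← Finset.prod_mul_distrib]
    refine Finset.prod_congr rfl fun j _ => ?_
    push_cast; ring
  · rw [neg_neg, brAux_nat, brAux_nat, zpow_neg, zpow_natCast, ← inv_pow, inv_neg_one]
    have : (-1 : ℂ) ^ p = ∏ j ∈ Finset.range p, (-1 : ℂ) := by simp
    rw [this, ← Finset.prod_mul_distrib, ← Finset.prod_range_reflect]
    refine Finset.prod_congr rfl fun j hj => ?_
    have hj := Finset.mem_range.1 hj
    have : p - 1 - j + (1 + j) = p := by omega
    have h2 : (((p - 1 - j : ℕ) : ℂ)) + (1 + (j : ℂ)) = p := by exact_mod_cast this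
    push_cast
    linear_combination -h2

lemma mphase_add_int (t : ℚ) (m : ℤ) : mphase (t + m) = mphase t * (-1) ^ m := by
  unfold mphase
  push_cast
  rw [mul_add, Complex.exp_add, mul_comm _ (m : ℂ), Complex.exp_int_mul, Complex.exp_pi_mul_I]

lemma prod_Icc_eq (x : ℚ) (M : ℕ) :
    ∏ a ∈ Finset.Icc (1 : ℤ) (M : ℤ), ((x + (a : ℚ) : ℚ) : ℂ) = brAux ((x : ℂ) + M) M := by
  rw [brAux_nat, prod_up]
  induction M with
  | zero => simp
  | succ M ih =>
    have : Finset.Icc (1 : ℤ) ((M + 1 : ℕ) : ℤ) = insert ((M : ℤ) + 1) (Finset.Icc (1 : ℤ) M) := by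
      ext k; simp only [Finset.mem_Icc, Finset.mem_insert]; push_cast; omega
    rw [this, Finset.prod_insert (by simp), ih, Finset.prod_range_succ, mul_comm]
    congr 1
    push_cast; ring

/-- the term-by-term Gamma-ratio identity `D′ · I = A` underlying the
expression of the pulled-back disk amplitude as an explicit hypergeometric series, where
`D′` is the framed disk factor, `I` the localized `I`-function factor, and the right-hand
side the coefficient of the disk potential. -/
theorem statement10 (s1 d0 : ℕ) (hs1 : 0 < s1) (hd0 : 0 < d0) (f : ℤ)
    (q : ℚ) (hq : q = (d0 : ℚ) / (s1 : ℚ))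
    (ε1 : ℚ) (hε1 : ε1 = Int.fract q)
    (ε2 ε3 : ℚ) (hε2 : 0 ≤ ε2 ∧ ε2 < 1) (hε3 : 0 ≤ ε3 ∧ ε3 < 1)
    (A : ℤ) (hA : (A : ℚ) = ε1 + ε2 + ε3)
    (l1 l2 l3 : ℚ)
    (hl1 : ∃ m : ℤ, l1 + ε1 = (m : ℚ))
    (hl2 : ∃ m : ℤ, l2 + ε2 = (m : ℚ))
    (hl3 : ∃ m : ℤ, l3 + ε3 = (m : ℚ))
    (L1 : ℕ) (hL1 : (L1 : ℚ) = q + l1)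
    (L2 L3 : ℚ) (hL2 : L2 = (f : ℚ) * q + l2) (hL3 : L3 = -((f : ℚ) + 1) * q + l3)
    (z : ℂ) (hz : z ≠ 0)
    (hB1 : BracketDefined ((q - ε1 : ℚ) : ℂ) ((L1 : ℕ) : ℂ))
    (hB2 : BracketDefined (((f : ℚ) * q - ε2 : ℚ) : ℂ) ((L2 : ℚ) : ℂ))
    (hB3 : BracketDefined ((-((f : ℚ) + 1) * q - ε3 : ℚ) : ℂ) ((L3 : ℚ) : ℂ))
    (hB4 : BracketDefined ((-L3 - 1 : ℚ) : ℂ) ((L2 : ℚ) : ℂ))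
    (hB5 : BracketDefined (0 : ℂ) ((L1 : ℕ) : ℂ)) :
    (-mphase (q * (-(f : ℚ) - 1) - ε3 - Int.fract (ε2 - (f : ℚ) * ε1)) *
          ((s1 : ℂ) / (d0 : ℂ)) * z ^ A *
          (∏ a ∈ Finset.Icc (1 : ℤ) (⌊q⌋ + A - 1),
            (((f : ℚ) * q - ε2 + (a : ℚ) : ℚ) : ℂ)) /
          ((⌊q⌋.toNat.factorial : ℂ))) *
        (z ^ (-A) * bracket ((q - ε1 : ℚ) : ℂ) ((L1 : ℕ) : ℂ) *
          bracket (((f : ℚ) * q - ε2 : ℚ) : ℂ) ((L2 : ℚ) : ℂ) *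
          bracket ((-((f : ℚ) + 1) * q - ε3 : ℚ) : ℂ) ((L3 : ℚ) : ℂ)) =
      -mphase (q * (-(f : ℚ) - 1) - Int.fract (ε2 - (f : ℚ) * ε1) + l3) *
        ((s1 : ℂ) / (d0 : ℂ)) * bracket ((-L3 - 1 : ℚ) : ℂ) ((L2 : ℚ) : ℂ) *
        bracket (0 : ℂ) ((L1 : ℕ) : ℂ) := by
  obtain ⟨m1, hm1⟩ := hl1
  obtain ⟨m2, hm2⟩ := hl2
  obtain ⟨m3, hm3⟩ := hl3
  have hqpos : 0 < q := by rw [hq]; positivity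
  have hN0 : 0 ≤ ⌊q⌋ := Int.floor_nonneg.2 hqpos.le
  obtain ⟨N, hN⟩ := Int.eq_ofNat_of_zero_le hN0
  have hqN : q = N + ε1 := by
    have := Int.floor_add_fract q
    rw [hN, ← hε1] at this
    exact_mod_cast this.symm
  have hε1' : 0 ≤ ε1 := by rw [hε1]; exact Int.fract_nonneg q
  have hM : 0 < (N : ℤ) + A := by
    have : (0 : ℚ) < (((N : ℤ) + A : ℤ) : ℚ) := by
      push_cast; rw [hA]; linarith [hε2.1, hε3.1]
    exact_mod_cast this
  obtain ⟨M, hMe⟩ := Int.eq_ofNat_of_zero_le (show 0 ≤ (N : ℤ) + A - 1 by omega)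
  have hMq : (M : ℚ) = N + A - 1 := by
    have := congrArg (Int.cast : ℤ → ℚ) hMe
    push_cast at this
    exact this.symm
  rw [hN, hMe, prod_Icc_eq, Int.toNat_natCast]
  set x : ℚ := (f : ℚ) * q - ε2 with hx
  set y : ℚ := -((f : ℚ) + 1) * q - ε3 with hy
  have hxy : -y - 1 = x + M := by rw [hMq, hA, hx, hy]; rw [hqN]; ring
  have hyC : -(y : ℂ) - 1 = x + M := by exact_mod_cast congrArg (Rat.cast : ℚ → ℂ) hxy
  have hL2' : L2 = x + m2 := by rw [hL2, ← hm2, hx]; ring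
  have hL3' : L3 = y + m3 := by rw [hL3, ← hm3, hy]; ring
  have hq1 : q - ε1 = (N : ℚ) := by rw [hqN]; ring
  have hq1C : ((q - ε1 : ℚ) : ℂ) = (N : ℂ) := by rw [hq1]; push_cast; rfl
  have n1 : ((q - ε1 : ℚ) : ℂ) - ((L1 : ℕ) : ℂ) = (((N : ℤ) - L1 : ℤ) : ℂ) := by
    rw [hq1C]; push_cast; ring
  have n2 : (x : ℂ) - (L2 : ℂ) = ((-m2 : ℤ) : ℂ) := by rw [hL2']; push_cast; ring
  have n3 : (y : ℂ) - (L3 : ℂ) = ((-m3 : ℤ) : ℂ) := by rw [hL3']; push_cast; ring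
  have a4 : ((-L3 - 1 : ℚ) : ℂ) = (x : ℂ) + M - m3 := by
    rw [hL3']; push_cast; linear_combination hyC
  have n4 : ((-L3 - 1 : ℚ) : ℂ) - (L2 : ℂ) = ((-m3 + (M + -m2) : ℤ) : ℂ) := by
    rw [a4, hL2']; push_cast; ring
  have n5 : (0 : ℂ) - ((L1 : ℕ) : ℂ) = ((-(N : ℤ) + (N - L1) : ℤ) : ℂ) := by push_cast; ring
  have d1 := dfAux_of _ _ _ n1 hB1
  have d2 := dfAux_of _ _ _ n2 hB2
  have d3 := dfAux_of _ _ _ n3 hB3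
  rw [bracket_eq _ _ _ n1, bracket_eq _ _ _ n2, bracket_eq _ _ _ n3, bracket_eq _ _ _ n4,
    bracket_eq _ _ _ n5, a4, hq1C, reflect (y : ℂ) m3]
  rw [hq1C] at d1
  have a3 : -(y : ℂ) - 1 - m3 = x + M - m3 := by rw [hyC]
  rw [a3]
  -- the cocycle identities
  have dM : dfAux ((x : ℂ) + M) M := fun k h1 h2 => by omega
  have c1 := cocycle ((x : ℂ) + M) x M (-m2) (by push_cast; ring) dM d2
  have dM2 : dfAux ((x : ℂ) + M) (M + -m2) := by
    intro k h1 h2 h3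
    apply d2 (k + M) (by omega) (by omega)
    push_cast
    linear_combination h3
  have d3' : dfAux ((x : ℂ) + M - m3) (-m3) := by
    intro k h1 h2 h3
    apply d3 (m3 - k + 1) (by omega) (by omega)
    push_cast
    linear_combination -h3 - hyC
  have c2 := cocycle ((x : ℂ) + M - m3) ((x : ℂ) + M) (-m3) (M + -m2) (by push_cast; ring) d3' dM2
  have d0' : dfAux 0 (-(N : ℤ)) := by
    intro k h1 h2 h3
    rw [zero_add] at h3
    have : k = 0 := by exact_mod_cast h3
    omega
  have c3 := cocycle 0 (N : ℂ) (-(N : ℤ)) (N - L1) (by push_cast; ring) d0' d1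
  have c4 : brAux 0 (-(N : ℤ)) = ((N.factorial : ℂ))⁻¹ := by
    rw [brAux_neg, ← Finset.prod_range_add_one_eq_factorial]
    congr 1
    push_cast
    refine Finset.prod_congr rfl fun j _ => ?_
    ring
  rw [← c2, ← c1, ← c3, c4]
  have hph : q * (-(f : ℚ) - 1) - Int.fract (ε2 - (f : ℚ) * ε1) + l3 =
      (q * (-(f : ℚ) - 1) - ε3 - Int.fract (ε2 - (f : ℚ) * ε1)) + m3 := by
    rw [← hm3]; ring
  rw [hph, mphase_add_int, zpow_neg]
  have hzA : z ^ A ≠ 0 := zpow_ne_zero _ hz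
  field_simp
end

section
/- Let N be a finitely generated abelian group with torsion-free quotient N̄ := N/N_tor of rank n, let b_1, …, b_r ∈ N generate N, let φ : ℤ^r → N be the induced surjection and L := ker φ. Let I' ⊂ {1, …, r} with |I'| = n be such that the images b̄_i for i ∈ I' form an ℝ-basis of N̄ ⊗ ℝ, and set I := {1, …, r} ∖ I'. For each i let D_i ∈ Hom(L, ℤ) be the restriction to L of the i-th coordinate function on ℤ^r, extended to L ⊗ ℚ. Let K := { β ∈ L ⊗ ℚ : ⟨D_i, β⟩ ∈ ℤ for all i ∈ I } and Box := { v ∈ N : v̄ = Σ_{i ∈ I'} c_i b̄_i in N̄ ⊗ ℚ with 0 ≤ c_i < 1 }. Then the map v : K → N defined by v(β) := Σ_{i=1}^r ⌈⟨D_i, β⟩⌉ · b_i takes values in Box, satisfies the relation (image of v(β) in N̄ ⊗ ℚ) = Σ_{i ∈ I'} {−⟨D_i, β⟩} · b̄_i, and induces a bijection K/L → Box. -/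
open scoped TensorProduct BigOperators

/-- The surjection `ℤ^r → N`, `x ↦ ∑ᵢ xᵢ • bᵢ`, induced by a generating family
`b₁, …, b_r` of an abelian group `N`. -/
def phiHom {N : Type*} [AddCommGroup N] {r : ℕ} (b : Fin r → N) : (Fin r → ℤ) →+ N :=
  AddMonoidHom.mk' (fun x => ∑ i, x i • b i)
    (fun x y => by simp [Pi.add_apply, add_smul, Finset.sum_add_distrib])

theorem aux_torsion {N : Type*} [AddCommGroup N] (y : N)
    (h : ((1 : ℚ) ⊗ₜ[ℤ] y : ℚ ⊗[ℤ] N) = 0) : ∃ m : ℤ, m ≠ 0 ∧ m • y = 0 := by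
  have inst : IsLocalizedModule (nonZeroDivisors ℤ) (TensorProduct.mk ℤ ℚ N 1) :=
    (isLocalizedModule_iff_isBaseChange (nonZeroDivisors ℤ) ℚ _).2
      (TensorProduct.isBaseChange ℤ N ℚ)
  obtain ⟨c, hc⟩ := (IsLocalizedModule.eq_zero_iff (nonZeroDivisors ℤ)
    (TensorProduct.mk ℤ ℚ N 1)).1 h
  exact ⟨c, nonZeroDivisors.coe_ne_zero c, hc⟩

theorem aux_tmul_sum {N : Type*} [AddCommGroup N] {r : ℕ} (b : Fin r → N) (x : Fin r → ℤ) :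
    ((1 : ℚ) ⊗ₜ[ℤ] (∑ i, x i • b i) : ℚ ⊗[ℤ] N) =
      ∑ i, (x i : ℚ) • ((1 : ℚ) ⊗ₜ[ℤ] b i : ℚ ⊗[ℤ] N) := by
  rw [TensorProduct.tmul_sum]
  refine Finset.sum_congr rfl fun i _ => ?_
  rw [TensorProduct.tmul_smul, Int.cast_smul_eq_zsmul]

theorem aux_denom {r : ℕ} (β : Fin r → ℚ) :
    ∃ d : ℤ, d ≠ 0 ∧ ∃ x : Fin r → ℤ, ∀ i, (d : ℚ) * β i = x i := by
  obtain ⟨d, hd⟩ := IsLocalization.exist_integer_multiples_of_finite (nonZeroDivisors ℤ) β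
  choose x hx using hd
  refine ⟨d, nonZeroDivisors.coe_ne_zero d, x, fun i => ?_⟩
  have := hx i
  simp only [zsmul_eq_mul, eq_intCast] at this
  exact this.symm

theorem aux_span {N : Type*} [AddCommGroup N] {r : ℕ} (b : Fin r → N) (β : Fin r → ℚ) :
    β ∈ Submodule.span ℚ ((fun x : Fin r → ℤ => fun i => (x i : ℚ)) ''
        {x | phiHom b x = 0}) ↔
      ∑ i, β i • ((1 : ℚ) ⊗ₜ[ℤ] b i : ℚ ⊗[ℤ] N) = 0 := by
  constructor
  · intro h
    induction h using Submodule.span_induction with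
    | mem x hx =>
      obtain ⟨x, hx, rfl⟩ := hx
      have hx' : ∑ i, x i • b i = 0 := hx
      rw [← aux_tmul_sum, hx', TensorProduct.tmul_zero]
    | zero => simp
    | add x y _ _ hx hy => simp [add_smul, Finset.sum_add_distrib, hx, hy]
    | smul a x _ hx => simp [mul_smul, ← Finset.smul_sum, hx]
  · intro h
    obtain ⟨d, hd, x, hx⟩ := aux_denom β
    have h1 : ((1 : ℚ) ⊗ₜ[ℤ] (∑ i, x i • b i) : ℚ ⊗[ℤ] N) = 0 := by
      rw [aux_tmul_sum]
      simp only [← hx, mul_smul, ← Finset.smul_sum, h, smul_zero]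
    obtain ⟨m, hm, hmx⟩ := aux_torsion _ h1
    have h2 : β = ((m : ℚ) * d)⁻¹ • (fun i => (((m • x) i : ℤ) : ℚ)) := by
      funext i
      have hm' : (m : ℚ) ≠ 0 := by exact_mod_cast hm
      have hd' : (d : ℚ) ≠ 0 := by exact_mod_cast hd
      simp only [Pi.smul_apply, smul_eq_mul, Int.cast_mul, ← hx]
      field_simp
    rw [h2]
    refine Submodule.smul_mem _ _ (Submodule.subset_span ⟨m • x, ?_, rfl⟩)
    have h3 : phiHom b x = ∑ i, x i • b i := rfl
    rw [Set.mem_setOf_eq, map_zsmul, h3, hmx]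

theorem aux_surj {N : Type*} [AddCommGroup N] {r : ℕ} (b : Fin r → N)
    (hgen : AddSubgroup.closure (Set.range b) = ⊤) (v : N) : ∃ x : Fin r → ℤ,
      ∑ i, x i • b i = v := by
  have hle : AddSubgroup.closure (Set.range b) ≤ (phiHom b).range := by
    rw [AddSubgroup.closure_le]
    rintro _ ⟨j, rfl⟩
    refine ⟨Pi.single j 1, ?_⟩
    change ∑ i, (Pi.single j 1 : Fin r → ℤ) i • b i = b j
    rw [Finset.sum_eq_single j]
    · simp
    · intro i _ hi
      simp [Pi.single_eq_of_ne hi]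
    · simp
  rw [hgen] at hle
  exact hle (AddSubgroup.mem_top v)

theorem aux_fract (x : ℚ) : Int.fract (-x) = (⌈x⌉ : ℚ) - x := by
  rw [Int.fract, Int.floor_neg]
  push_cast
  ring

/-- with `L = ker(φ : ℤ^r → N)`, `I'` a subset of indices whose images form
a basis of `N ⊗ ℚ` (equivalently of `N̄ ⊗ ℝ`), `Dᵢ` the coordinate functionals,
`K = {β ∈ L ⊗ ℚ : ⟨Dᵢ, β⟩ ∈ ℤ ∀ i ∉ I'}` and
`Box = {v ∈ N : v̄ = ∑_{i ∈ I'} cᵢ b̄ᵢ, 0 ≤ cᵢ < 1}`, the map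
`v(β) = ∑ᵢ ⌈⟨Dᵢ, β⟩⌉ bᵢ` takes values in `Box`, satisfies
`v(β)‾ = ∑_{i ∈ I'} {−⟨Dᵢ, β⟩} b̄ᵢ`, and induces a bijection `K/L → Box`.
Here `N ⊗ ℚ` is realized as `ℚ ⊗[ℤ] N` (with `v̄ = 1 ⊗ v`) and `L ⊗ ℚ` as the ℚ-span of
`L` inside `ℚ^r`. -/
theorem statement11 (N : Type*) [AddCommGroup N] (n r : ℕ)
    (b : Fin r → N) (hgen : AddSubgroup.closure (Set.range b) = ⊤)
    (I' : Finset (Fin r)) (hcard : I'.card = n)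
    (hind : LinearIndependent ℚ (fun i : I' => ((1 : ℚ) ⊗ₜ[ℤ] b i : ℚ ⊗[ℤ] N)))
    (hspan : Submodule.span ℚ
      (Set.range fun i : I' => ((1 : ℚ) ⊗ₜ[ℤ] b i : ℚ ⊗[ℤ] N)) = ⊤)
    (K : Set (Fin r → ℚ))
    (hK : K = {β | β ∈ Submodule.span ℚ ((fun x : Fin r → ℤ => fun i => (x i : ℚ)) ''
        {x | phiHom b x = 0}) ∧ ∀ i ∉ I', ∃ m : ℤ, β i = (m : ℚ)})
    (Box : Set N)
    (hBox : Box = {v | ∃ c : Fin r → ℚ, (∀ i ∈ I', 0 ≤ c i ∧ c i < 1) ∧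
        ((1 : ℚ) ⊗ₜ[ℤ] v : ℚ ⊗[ℤ] N) = ∑ i ∈ I', c i • ((1 : ℚ) ⊗ₜ[ℤ] b i)})
    (vmap : (Fin r → ℚ) → N) (hvmap : ∀ β, vmap β = ∑ i, ⌈β i⌉ • b i) :
    (∀ β ∈ K, vmap β ∈ Box) ∧
    (∀ β ∈ K, ((1 : ℚ) ⊗ₜ[ℤ] vmap β : ℚ ⊗[ℤ] N) =
        ∑ i ∈ I', Int.fract (-(β i)) • ((1 : ℚ) ⊗ₜ[ℤ] b i : ℚ ⊗[ℤ] N)) ∧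
    (∀ v ∈ Box, ∃ β ∈ K, vmap β = v) ∧
    (∀ β ∈ K, ∀ β' ∈ K, (vmap β = vmap β' ↔
        ∃ x : Fin r → ℤ, phiHom b x = 0 ∧ β' - β = fun i => (x i : ℚ))) := by
  have hrel : ∀ β ∈ K, ((1 : ℚ) ⊗ₜ[ℤ] vmap β : ℚ ⊗[ℤ] N) =
        ∑ i ∈ I', Int.fract (-(β i)) • ((1 : ℚ) ⊗ₜ[ℤ] b i : ℚ ⊗[ℤ] N) := by
    intro β hβ
    rw [hK] at hβ
    obtain ⟨h1, h2⟩ := hβ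
    rw [aux_span] at h1
    rw [hvmap, aux_tmul_sum]
    have h3 : ∑ i ∈ I', Int.fract (-(β i)) • ((1 : ℚ) ⊗ₜ[ℤ] b i : ℚ ⊗[ℤ] N) =
        ∑ i, Int.fract (-(β i)) • ((1 : ℚ) ⊗ₜ[ℤ] b i : ℚ ⊗[ℤ] N) := by
      refine Finset.sum_subset (Finset.subset_univ _) fun i _ hi => ?_
      obtain ⟨m, hm⟩ := h2 i hi
      rw [aux_fract, hm, Int.ceil_intCast, sub_self, zero_smul]
    rw [h3]
    simp only [aux_fract, sub_smul, Finset.sum_sub_distrib, h1, sub_zero]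
  refine ⟨?_, hrel, ?_, ?_⟩
  · intro β hβ
    rw [hBox]
    exact ⟨fun i => Int.fract (-(β i)),
      fun i _ => ⟨Int.fract_nonneg _, Int.fract_lt_one _⟩, hrel β hβ⟩
  · intro v hv
    rw [hBox] at hv
    obtain ⟨c, hc, hvc⟩ := hv
    obtain ⟨x, rfl⟩ := aux_surj b hgen v
    rw [aux_tmul_sum] at hvc
    refine ⟨fun i => (x i : ℚ) - if i ∈ I' then c i else 0, ?_, ?_⟩
    · rw [hK]
      refine ⟨?_, fun i hi => ⟨x i, by simp [hi]⟩⟩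
      rw [aux_span]
      simp only [sub_smul, Finset.sum_sub_distrib, hvc, ite_smul, zero_smul]
      simp
    · rw [hvmap]
      refine Finset.sum_congr rfl fun i _ => ?_
      congr 1
      by_cases hi : i ∈ I'
      · obtain ⟨h0, h1⟩ := hc i hi
        rw [Int.ceil_eq_iff]
        simp only [hi, if_true]
        constructor <;> linarith
      · simp [hi]
  · intro β hβ β' hβ'
    constructor
    · intro h
      have h1 := hrel β hβ
      rw [h, hrel β' hβ', ← sub_eq_zero, ← Finset.sum_sub_distrib] at h1
      simp only [← sub_smul] at h1
      rw [← Finset.sum_coe_sort I'] at h1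
      have h2 := Fintype.linearIndependent_iff.1 hind
        (fun i => Int.fract (-(β' i)) - Int.fract (-(β i))) h1
      rw [hK] at hβ hβ'
      refine ⟨fun i => ⌈β' i⌉ - ⌈β i⌉, ?_, ?_⟩
      · change ∑ i, (⌈β' i⌉ - ⌈β i⌉) • b i = 0
        rw [hvmap, hvmap] at h
        simp only [sub_smul, Finset.sum_sub_distrib, h, sub_self]
      · funext i
        simp only [Pi.sub_apply, Int.cast_sub]
        by_cases hi : i ∈ I'
        · have h3 := h2 ⟨i, hi⟩
          simp only [aux_fract] at h3
          linarith
        · obtain ⟨m, hm⟩ := hβ.2 i hi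
          obtain ⟨m', hm'⟩ := hβ'.2 i hi
          rw [hm, hm', Int.ceil_intCast, Int.ceil_intCast]
    · rintro ⟨x, hx, hd⟩
      have hx' : ∑ i, x i • b i = 0 := hx
      have h1 : ∀ i, ⌈β' i⌉ = ⌈β i⌉ + x i := by
        intro i
        have h2 := congrFun hd i
        simp only [Pi.sub_apply] at h2
        rw [← Int.ceil_add_intCast]
        congr 1
        linarith
      rw [hvmap, hvmap]
      simp only [h1, add_smul, Finset.sum_add_distrib, hx', add_zero]
end

section
/- Let N be a finitely generated abelian group with N̄ := N/N_tor of rank n, let b_1, …, b_r ∈ N generate N, let φ : ℤ^r → N be the induced surjection and L := ker φ (so L has rank k = r − n). Let I' ⊂ {1, …, r} with |I'| = n be such that the images b̄_i for i ∈ I' form an ℝ-basis of N̄ ⊗ ℝ, and set I := {1, …, r} ∖ I'. For each i ∈ I let D_i ∈ Hom(L, ℤ) be the restriction to L of the i-th coordinate function on ℤ^r. Then the subgroup K^∨ := Σ_{i ∈ I} ℤ·D_i is a finite-index subgroup of Hom(L, ℤ). -/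
open scoped TensorProduct BigOperators

/-- `Dᵢ ∈ Hom(L, ℤ)`: the restriction to `L = ker(φ : ℤ^r → N)` of the `i`-th coordinate
function on `ℤ^r`. -/
def coordHom {N : Type*} [AddCommGroup N] {r : ℕ} (b : Fin r → N) (i : Fin r) :
    ↥(phiHom b).ker →+ ℤ :=
  AddMonoidHom.mk' (fun x => (x : Fin r → ℤ) i) (fun _ _ => rfl)

lemma exists_rel {N : Type*} [AddCommGroup N] {r : ℕ} (b : Fin r → N) (I' : Finset (Fin r))
    (hspan : Submodule.span ℚ
      (Set.range fun i : I' => ((1 : ℚ) ⊗ₜ[ℤ] b i : ℚ ⊗[ℤ] N)) = ⊤) (j : Fin r) (hj : j ∉ I') :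
    ∃ m : ℤ, m ≠ 0 ∧ ∃ l : (phiHom b).ker, ∀ i, i ∉ I' →
      (l : Fin r → ℤ) i = if i = j then m else 0 := by
  have h : ((1 : ℚ) ⊗ₜ[ℤ] b j : ℚ ⊗[ℤ] N) ∈ Submodule.span ℚ
      (Set.range fun i : I' => ((1 : ℚ) ⊗ₜ[ℤ] b i : ℚ ⊗[ℤ] N)) := by rw [hspan]; trivial
  obtain ⟨q, hq⟩ := (Submodule.mem_span_range_iff_exists_fun ℚ).1 h
  obtain ⟨d, hd⟩ := IsLocalization.exist_integer_multiples (nonZeroDivisors ℤ) Finset.univ q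
  choose c hc using fun i => hd i (Finset.mem_univ i)
  have hloc : IsLocalizedModule (nonZeroDivisors ℤ) (TensorProduct.mk ℤ ℚ N 1) :=
    (isLocalizedModule_iff_isBaseChange (nonZeroDivisors ℤ) ℚ _).2
      (TensorProduct.isBaseChange ℤ N ℚ)
  have h0 : TensorProduct.mk ℤ ℚ N 1 ((d : ℤ) • b j - ∑ i : I', c i • b i) = 0 := by
    rw [map_sub, map_sum, map_zsmul]
    simp only [map_zsmul, TensorProduct.mk_apply]
    rw [← hq, Finset.smul_sum, sub_eq_zero]
    refine Finset.sum_congr rfl fun i _ => ?_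
    have := hc i
    simp only [eq_intCast, zsmul_eq_mul] at this
    rw [← Int.cast_smul_eq_zsmul ℚ, ← Int.cast_smul_eq_zsmul ℚ, this, smul_smul]
  obtain ⟨t, ht⟩ := (IsLocalizedModule.eq_zero_iff (nonZeroDivisors ℤ) _).1 h0
  refine ⟨t * d, mul_ne_zero (nonZeroDivisors.coe_ne_zero t) (nonZeroDivisors.coe_ne_zero d),
    ⟨fun i => if h : i ∈ I' then - (t * c ⟨i, h⟩) else if i = j then t * d else 0, ?_⟩, ?_⟩
  · rw [AddMonoidHom.mem_ker]
    change ∑ i, _ • b i = 0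
    rw [← ht, ← Finset.sum_add_sum_compl I', ← Finset.sum_coe_sort I']
    rw [Finset.sum_eq_single_of_mem (s := I'ᶜ) j (by simpa using hj)]
    · simp [hj, Submonoid.smul_def, smul_sub, mul_smul, Finset.smul_sum]
      abel
    · intro i hi hij
      rw [Finset.mem_compl] at hi
      simp [hi, hij]
  · intro i hi
    simp [hi]

lemma ker_inj {N : Type*} [AddCommGroup N] {r : ℕ} (b : Fin r → N) (I' : Finset (Fin r))
    (hind : LinearIndependent ℚ (fun i : I' => ((1 : ℚ) ⊗ₜ[ℤ] b i : ℚ ⊗[ℤ] N)))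
    (x : (phiHom b).ker) (hx : ∀ i, i ∉ I' → (x : Fin r → ℤ) i = 0) : x = 0 := by
  obtain ⟨x, h⟩ := x
  rw [AddMonoidHom.mem_ker] at h
  change ∑ i, x i • b i = 0 at h
  rw [← Finset.sum_add_sum_compl I', ← Finset.sum_coe_sort I',
    Finset.sum_eq_zero (s := I'ᶜ), add_zero] at h
  · have h1 := congrArg (TensorProduct.mk ℤ ℚ N 1) h
    simp only [map_sum, map_zsmul, map_zero, TensorProduct.mk_apply] at h1
    have h2 := Fintype.linearIndependent_iff.1 hind (fun i => (x i : ℚ)) (by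
      simpa only [Int.cast_smul_eq_zsmul] using h1)
    ext i
    by_cases hi : i ∈ I'
    · exact_mod_cast h2 ⟨i, hi⟩
    · exact hx i hi
  · intro i hi
    rw [show x i = 0 from hx i (by simpa using hi), zero_smul]

/-- with `L = ker(φ : ℤ^r → N)` and `I'` a set of indices whose images
`b̄ᵢ` form a basis of `N ⊗ ℚ` (equivalently an ℝ-basis of `N̄ ⊗ ℝ`), the subgroup
`K^∨ = ∑_{i ∉ I'} ℤ·Dᵢ` of `Hom(L, ℤ)` has finite index. -/
theorem statement14 (N : Type*) [AddCommGroup N] (n r : ℕ)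
    (b : Fin r → N) (hgen : AddSubgroup.closure (Set.range b) = ⊤)
    (I' : Finset (Fin r)) (hcard : I'.card = n)
    (hind : LinearIndependent ℚ (fun i : I' => ((1 : ℚ) ⊗ₜ[ℤ] b i : ℚ ⊗[ℤ] N)))
    (hspan : Submodule.span ℚ
      (Set.range fun i : I' => ((1 : ℚ) ⊗ₜ[ℤ] b i : ℚ ⊗[ℤ] N)) = ⊤) :
    (AddSubgroup.closure
        {g : ↥(phiHom b).ker →+ ℤ | ∃ i ∉ I', g = coordHom b i}).FiniteIndex := by
  classical
  set K := AddSubgroup.closure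
        {g : ↥(phiHom b).ker →+ ℤ | ∃ i ∉ I', g = coordHom b i} with hK
  choose m hm l hl using exists_rel b I' hspan
  let M : ℤ := ∏ j : {j // j ∉ I'}, m j.1 j.2
  have hM : M ≠ 0 := Finset.prod_ne_zero_iff.2 fun j _ => hm _ _
  have hdvd : ∀ j : {j // j ∉ I'}, ∃ e, M = m j.1 j.2 * e := fun j =>
    Finset.dvd_prod_of_mem (fun j : {j // j ∉ I'} => m j.1 j.2) (Finset.mem_univ j)
  choose e he using hdvd
  have key : ∀ f : (phiHom b).ker →+ ℤ, M • f ∈ K := by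
    intro f
    have hx : ∀ x : (phiHom b).ker, M • x =
        ∑ j : {j // j ∉ I'}, ((x : Fin r → ℤ) j.1 * e j) • l j.1 j.2 := by
      intro x
      rw [← sub_eq_zero]
      apply ker_inj b I' hind
      intro i hi
      have h1 : (((∑ j : {j // j ∉ I'}, ((x : Fin r → ℤ) j.1 * e j) • l j.1 j.2 :
          (phiHom b).ker)) : Fin r → ℤ) i =
          ∑ j : {j // j ∉ I'}, ((x : Fin r → ℤ) j.1 * e j) * (l j.1 j.2 : Fin r → ℤ) i := by
        rw [AddSubgroup.val_finsetSum, Finset.sum_apply]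
        rfl
      have h2 : ((M • x : (phiHom b).ker) : Fin r → ℤ) i = M * (x : Fin r → ℤ) i := rfl
      rw [AddSubgroup.coe_sub, Pi.sub_apply, h1, h2,
        Finset.sum_eq_single_of_mem (⟨i, hi⟩ : {j // j ∉ I'}) (Finset.mem_univ _)]
      · rw [hl i hi i hi, if_pos rfl, he ⟨i, hi⟩]
        ring
      · intro j _ hj
        rw [hl _ _ i hi, if_neg, mul_zero]
        rintro rfl
        exact hj rfl
    have hf : M • f = ∑ j : {j // j ∉ I'}, (e j * f (l j.1 j.2)) • coordHom b j.1 := by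
      ext x
      have h3 : (M • f) x = f (M • x) := by simp
      rw [h3, hx x, map_sum, AddMonoidHom.finsetSum_apply]
      refine Finset.sum_congr rfl fun j _ => ?_
      rw [map_zsmul]
      change _ = (e j * f (l j.1 j.2)) • ((x : Fin r → ℤ) j.1)
      simp only [smul_eq_mul]
      ring
    rw [hf]
    exact sum_mem fun j _ => K.zsmul_mem (AddSubgroup.subset_closure ⟨j.1, j.2, rfl⟩) _
  have hLfin : Module.Finite ℤ (phiHom b).ker :=
    Module.Finite.of_injective (phiHom b).ker.subtype.toIntLinearMap Subtype.val_injective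
  have hLtf : Module.IsTorsionFree ℤ (phiHom b).ker :=
    Function.Injective.moduleIsTorsionFree (phiHom b).ker.subtype Subtype.val_injective
      (fun _ _ => rfl)
  have hLfree : Module.Free ℤ (phiHom b).ker := inferInstance
  have hfin : Module.Finite ℤ ((phiHom b).ker →+ ℤ) :=
    Module.Finite.equiv (addMonoidHomLequivInt (A := (phiHom b).ker) (B := ℤ) ℤ).symm
  have hq : Module.Finite ℤ (((phiHom b).ker →+ ℤ) ⧸ K) :=
    Module.Finite.of_surjective (QuotientAddGroup.mk' K).toIntLinearMap
      (QuotientAddGroup.mk'_surjective K)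
  have htor : Module.IsTorsion ℤ (((phiHom b).ker →+ ℤ) ⧸ K) := by
    intro y
    obtain ⟨f, rfl⟩ := QuotientAddGroup.mk'_surjective K y
    refine ⟨⟨M, mem_nonZeroDivisors_of_ne_zero hM⟩, ?_⟩
    change M • (QuotientAddGroup.mk' K f) = 0
    rw [← map_zsmul]
    exact (QuotientAddGroup.eq_zero_iff _).2 (key f)
  have : Finite (((phiHom b).ker →+ ℤ) ⧸ K) := Module.finite_of_fg_torsion _ htor
  exact AddSubgroup.finiteIndex_of_finite_quotient
end

section
/- Let 0 → L → ℤ^r →^{φ} N → 0 be a short exact sequence of abelian groups with φ surjective and L = ker φ. Then the restriction homomorphism Hom(ℤ^r, ℤ) → Hom(L, ℤ) is surjective if and only if N is torsion-free. -/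
/-- for a short exact sequence `0 → L → ℤ^r →^φ N → 0` (so `φ` is
surjective and `L = ker φ`), the restriction map `Hom(ℤ^r, ℤ) → Hom(L, ℤ)` is surjective
if and only if `N` is torsion-free. -/
theorem statement15 (N : Type*) [AddCommGroup N] (r : ℕ)
    (φ : (Fin r → ℤ) →+ N) (hφ : Function.Surjective φ) :
    Function.Surjective
        (fun g : (Fin r → ℤ) →+ ℤ => g.comp φ.ker.subtype) ↔
      ∀ (x : N) (n : ℤ), n ≠ 0 → n • x = 0 → x = 0 := by
  constructor
  · intro hs x n hn hx
    obtain ⟨v, rfl⟩ := hφ x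
    let K : Submodule ℤ (Fin r → ℤ) := LinearMap.ker φ.toIntLinearMap
    let b := Module.Free.chooseBasis ℤ K
    have hmem : ∀ y : φ.ker, (y : Fin r → ℤ) ∈ K := fun y => y.2
    have hg : ∀ i, ∃ g : (Fin r → ℤ) →+ ℤ, ∀ y : K, g y = b.repr y i := by
      intro i
      obtain ⟨g, hg⟩ := hs (AddMonoidHom.mk' (fun y : φ.ker => b.repr ⟨y.1, hmem y⟩ i) (by
        intro y z
        have : (⟨(y + z).1, hmem (y + z)⟩ : K) = ⟨y.1, hmem y⟩ + ⟨z.1, hmem z⟩ := rfl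
        rw [this, map_add, Finsupp.add_apply]))
      exact ⟨g, fun y => DFunLike.congr_fun hg (⟨y.1, y.2⟩ : φ.ker)⟩
    choose g hg using hg
    have hnv : n • v ∈ K := by
      change φ (n • v) = 0
      rw [map_zsmul, hx]
    let w : K := ∑ i, g i v • b i
    have hw : n • w = ⟨n • v, hnv⟩ := by
      rw [← b.sum_repr ⟨n • v, hnv⟩, Finset.smul_sum]
      refine Finset.sum_congr rfl fun i _ => ?_
      rw [← hg i, map_zsmul, smul_assoc]
    have hw2 : n • (w : Fin r → ℤ) = n • v := congrArg Subtype.val hw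
    have hw3 : (w : Fin r → ℤ) = v := smul_right_injective _ hn hw2
    rw [← hw3]
    exact w.2
  · intro ht f
    have : Module.Finite ℤ N := Module.Finite.of_surjective φ.toIntLinearMap hφ
    have : Module.IsTorsionFree ℤ N := by
      refine ⟨fun n hn x y hxy => ?_⟩
      refine sub_eq_zero.1 (ht (x - y) n hn.ne_zero ?_)
      rw [smul_sub]
      exact sub_eq_zero.2 hxy
    have : Module.Free ℤ N := inferInstance
    obtain ⟨s, hs⟩ := Module.projective_lifting_property φ.toIntLinearMap LinearMap.id hφ
    have hs' : ∀ x, φ (s x) = x := fun x => LinearMap.congr_fun hs x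
    have hk : ∀ v, v - s (φ v) ∈ φ.ker := fun v => by
      rw [AddMonoidHom.mem_ker, map_sub, hs', sub_self]
    refine ⟨AddMonoidHom.mk' (fun v => f ⟨v - s (φ v), hk v⟩) ?_, ?_⟩
    · intro u v
      rw [← map_add]
      congr 1
      apply Subtype.ext
      simp only [map_add, AddSubgroup.coe_add]
      abel
    · ext y
      have hy : φ (y : Fin r → ℤ) = 0 := y.2
      change f ⟨(y : Fin r → ℤ) - s (φ y), hk y⟩ = f y
      congr 1
      apply Subtype.ext
      simp [hy]
end
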